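/- For every integer m ≥ 0 and every p ∈ [1,∞], with γ = max(0, m − 1/p), there is a constant c > 0, depending only on f, D, m and p, such that for every ν ∈ (0,1], the time average over [T₁,T₂] satisfies { |u(t)|_{m,p}² }^{1/2} ≥ c ν^{−γ}. -/

import Mathlib

open MeasureTheory Set
open scoped ENNReal

/-- The `L^p` norm (on the circle, i.e. over one period `(0,1]`) of the `m`-th
derivative of a function `v : ℝ → ℝ` (identified with a function on `S¹ = ℝ/ℤ`). -/
noncomputable def sobLp (m : ℕ) (p : ℝ≥0∞) (v : ℝ → ℝ) : ℝ :=
  (eLpNorm (iteratedDeriv m v) p (volume.restrict (Ioc (0:ℝ) 1))).toReal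

/-- `u` is a smooth, space-periodic, zero-mean-value solution of the generalised
Burgers equation `u_t + f'(u) u_x - ν u_xx = 0` with strongly convex `f` and
nonzero initial condition. -/
structure IsBurgersSolution (f : ℝ → ℝ) (σ ν : ℝ) (u : ℝ → ℝ → ℝ) : Prop where
  hf : ContDiff ℝ (⊤ : ℕ∞) f
  hσ : 0 < σ
  hconv : ∀ y, σ ≤ iteratedDeriv 2 f y
  hν : 0 < ν
  hu : ContDiffOn ℝ (⊤ : ℕ∞) (Function.uncurry u) (Ici (0:ℝ) ×ˢ univ)
  hper : ∀ t x, u t (x + 1) = u t x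
  hpde : ∀ t, 0 < t → ∀ x,
    deriv (fun s => u s x) t + deriv f (u t x) * deriv (u t) x
      - ν * deriv (deriv (u t)) x = 0
  hmean : ∀ t, 0 ≤ t → ∫ x in Ioc (0:ℝ) 1, u t x = 0
  hinit : ∃ x, u 0 x ≠ 0

/-- The quantity `D = max(|u₀|₁⁻¹, |u₀|_{1,∞})`. -/
noncomputable def burgersD (u : ℝ → ℝ → ℝ) : ℝ :=
  max (sobLp 0 1 (u 0))⁻¹ (sobLp 1 ⊤ (u 0))

/-- `T₁ = D⁻² C̃⁻¹ / 4`. -/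
noncomputable def burgersT₁ (D Ct : ℝ) : ℝ := (D ^ 2)⁻¹ * Ct⁻¹ / 4

/-- `T₂ = max(3T₁/2, 2Dσ⁻¹)`. -/
noncomputable def burgersT₂ (σ D Ct : ℝ) : ℝ :=
  max (3 / 2 * burgersT₁ D Ct) (2 * D * σ⁻¹)

/-- Time average over `[T₁, T₂]`. -/
noncomputable def timeAvg (T₁ T₂ : ℝ) (A : ℝ → ℝ) : ℝ :=
  (T₂ - T₁)⁻¹ * ∫ t in T₁..T₂, A t

/-- The structure function `S_p(ℓ)`. -/
noncomputable def structFun (T₁ T₂ : ℝ) (u : ℝ → ℝ → ℝ) (p ℓ : ℝ) : ℝ :=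
  timeAvg T₁ T₂ (fun t => ∫ x in Ioc (0:ℝ) 1, |u t (x + ℓ) - u t x| ^ p)

/-!
Where `u_x` has a spatial maximum the equation gives `∂ₜ u_x ≤ -σ u_x²`, so the maximum principle
for `u_x` and `t u_x` yields `u_x ≤ min (D, (σ t)⁻¹)`. As `u` and `u_x` have mean zero, this
one-sided bound controls `|u|_∞` and `|u_x|₁`. The viscous flux `ν u_x - f(u)` obeys a maximum
principle as well, hence `|u_x|_∞ ≤ C ν⁻¹`.

By the energy identity `|u|₂²` decreases at rate `2 ν |u_x|₂²`. It is still of order one near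
`T₁`, because `|u_x|₂² ≤ C̃ ν⁻¹` slows its decay, and by `T₂` the bound `u_x ≤ (σ t)⁻¹` has made
it smaller by a fixed factor. Hence the time average of `|u_x|₂²` is at least of order `ν⁻¹`, and
as `C̃ ν⁻¹` also bounds `|u_x|₂²` from above, `|u_x|₂²` is of order `ν⁻¹` on a set of times of
measure bounded from below. At such times interpolation with the bounds on `u`, `|u_x|₁` and
`|u_x|_∞` forces `|u|_{m,p} ≥ c ν^{-(m - 1/p)}` for `m ≥ 1`. For `m = 0` the energy bound near
`T₁` suffices.
-/

section LebesgueNorms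

variable {α E : Type*} [MeasurableSpace α] [NormedAddCommGroup E] {μ : Measure α} {p q : ℝ≥0∞}

lemma lpNorm_mono_exponent [IsProbabilityMeasure μ] {f : α → E} (hpq : p ≤ q)
    (hf : MemLp f q μ) : lpNorm f p μ ≤ lpNorm f q μ := by
  rw [← toReal_eLpNorm hf.1, ← toReal_eLpNorm hf.1]
  exact ENNReal.toReal_mono hf.2.ne (eLpNorm_le_eLpNorm_of_exponent_le hpq hf.1)

lemma lpNorm_le_of_ae_bound [IsProbabilityMeasure μ] {f : α → E} {C : ℝ} (hC : 0 ≤ C)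
    (hf : ∀ᵐ x ∂μ, ‖f x‖ ≤ C) : lpNorm f p μ ≤ C := by
  by_cases hfm : AEStronglyMeasurable f μ
  · rw [← toReal_eLpNorm hfm]
    exact ENNReal.toReal_le_of_le_ofReal hC (by simpa using eLpNorm_le_of_ae_bound (p := p) hf)
  · simpa only [lpNorm_of_not_aestronglyMeasurable hfm] using hC

lemma toReal_one_div_le_one (hp : 1 ≤ p) : (1 / p).toReal ≤ 1 :=
  ENNReal.toReal_le_of_le_ofReal zero_le_one (by simpa using hp)

lemma setIntegral_norm_le_rpow_mul_lpNorm {f : α → E} (hp : 1 ≤ p) (hf : MemLp f p μ) {s : Set α}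
    (hs : μ s ≠ ∞) :
    ∫ x in s, ‖f x‖ ∂μ ≤ μ.real s ^ (1 - (1 / p).toReal) * lpNorm f p μ := by
  have hexp : 1 / (1 : ℝ≥0∞).toReal - 1 / p.toReal = 1 - (1 / p).toReal := by simp
  have hexp_nonneg : 0 ≤ 1 - (1 / p).toReal := sub_nonneg.2 (toReal_one_div_le_one hp)
  have hholder : eLpNorm f 1 (μ.restrict s) ≤ eLpNorm f p μ * μ s ^ (1 - (1 / p).toReal) := by
    refine (eLpNorm_le_eLpNorm_mul_rpow_measure_univ hp hf.1.restrict).trans ?_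
    rw [hexp, Measure.restrict_apply_univ]
    gcongr
    exact Measure.restrict_le_self
  have hreal := ENNReal.toReal_mono
    (ENNReal.mul_ne_top hf.2.ne (ENNReal.rpow_ne_top_of_nonneg hexp_nonneg hs)) hholder
  rw [ENNReal.toReal_mul, ← ENNReal.toReal_rpow, toReal_eLpNorm hf.1,
    toReal_eLpNorm hf.1.restrict, lpNorm_one_eq_integral_norm hf.1.restrict] at hreal
  rwa [mul_comm]

lemma lpNorm_two_sq {f : α → ℝ} (hf : AEStronglyMeasurable f μ) :
    lpNorm f 2 μ ^ 2 = ∫ x, f x ^ 2 ∂μ := by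
  rw [lpNorm_eq_integral_norm_rpow_toReal two_ne_zero ENNReal.ofNat_ne_top hf,
    ← Real.rpow_natCast, ← Real.rpow_mul (by positivity)]
  simp

variable [IsFiniteMeasure μ] {w : α → ℝ}

lemma lpNorm_two_sq_le_lpNorm_top_mul_lpNorm_one (hw : MemLp w ∞ μ) :
    lpNorm w 2 μ ^ 2 ≤ lpNorm w ∞ μ * lpNorm w 1 μ := by
  rw [lpNorm_two_sq hw.1, lpNorm_one_eq_integral_norm hw.1, ← integral_const_mul]
  refine integral_mono_ae (hw.mono_exponent le_top).integrable_sq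
    ((hw.integrable le_top).norm.const_mul _) ?_
  filter_upwards [ae_le_lpNorm_exponent_top hw] with x hx
  rw [← sq_abs, sq]
  exact mul_le_mul_of_nonneg_right hx (abs_nonneg _)

/-- Split the integral of `w ^ 2` at height `l`. Above that height use Hölder's inequality on the
set `{l ≤ |w|}`, whose measure is at most `‖w‖₁ / l` by Markov's inequality. -/
lemma lpNorm_two_sq_sub_le_mul_lpNorm (hp : 1 ≤ p) (hw : MemLp w ∞ μ) {l : ℝ} (hl : 0 < l) :
    lpNorm w 2 μ ^ 2 - l * lpNorm w 1 μ ≤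
      lpNorm w ∞ μ * ((lpNorm w 1 μ / l) ^ (1 - (1 / p).toReal) * lpNorm w p μ) := by
  set S := {x | l ≤ ‖w x‖}
  have hint : Integrable (fun x => ‖w x‖) μ := (hw.integrable le_top).norm
  have hS : NullMeasurableSet S μ := nullMeasurableSet_le aemeasurable_const hint.aemeasurable
  have hmarkov : μ.real S ≤ lpNorm w 1 μ / l := by
    rw [le_div_iff₀ hl, mul_comm, lpNorm_one_eq_integral_norm hw.1]
    exact mul_meas_ge_le_integral_of_nonneg (.of_forall fun _ => norm_nonneg _) hint l
  have hsplit : lpNorm w 2 μ ^ 2 ≤ l * lpNorm w 1 μ + lpNorm w ∞ μ * ∫ x in S, ‖w x‖ ∂μ := by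
    rw [lpNorm_two_sq hw.1, lpNorm_one_eq_integral_norm hw.1, ← integral_indicator₀ hS,
      ← integral_const_mul, ← integral_const_mul,
      ← integral_add (hint.const_mul l) ((hint.indicator₀ hS).const_mul _)]
    refine integral_mono_ae (hw.mono_exponent le_top).integrable_sq
      ((hint.const_mul l).add ((hint.indicator₀ hS).const_mul _)) ?_
    filter_upwards [ae_le_lpNorm_exponent_top hw] with x hx
    simp only [indicator, ← sq_abs (w x), Real.norm_eq_abs] at hx ⊢
    split_ifs with hxS
    · nlinarith [mul_nonneg hl.le (abs_nonneg (w x)), abs_nonneg (w x)]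
    · have hlow : |w x| < l := not_le.1 hxS
      nlinarith [abs_nonneg (w x)]
  have hholder := setIntegral_norm_le_rpow_mul_lpNorm hp (hw.mono_exponent le_top)
    (measure_ne_top μ S)
  have hpow : μ.real S ^ (1 - (1 / p).toReal) ≤ (lpNorm w 1 μ / l) ^ (1 - (1 / p).toReal) :=
    Real.rpow_le_rpow measureReal_nonneg hmarkov (sub_nonneg.2 (toReal_one_div_le_one hp))
  have htop := mul_le_mul_of_nonneg_left
    (hholder.trans (mul_le_mul_of_nonneg_right hpow lpNorm_nonneg))
    (lpNorm_nonneg (f := w) (p := ∞) (μ := μ))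
  linarith

end LebesgueNorms

section PeriodMeasure

variable {E : Type*} [NormedAddCommGroup E] {g : ℝ → E} {p : ℝ≥0∞}

/-- Lebesgue measure on the fundamental domain `(0, 1]` of the circle `ℝ / ℤ`; functions on the
circle are represented by `1`-periodic functions on `ℝ`. -/
noncomputable abbrev periodMeasure : Measure ℝ := volume.restrict (Ioc 0 1)

instance : IsProbabilityMeasure periodMeasure := ⟨by simp⟩

lemma memLp_periodMeasure (hg : Continuous g) : MemLp g p periodMeasure := by
  obtain ⟨C, hC⟩ := isCompact_Icc.exists_bound_of_continuousOn (s := Icc (0 : ℝ) 1) hg.continuousOn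
  have htop : MemLp g ∞ periodMeasure :=
    memLp_top_of_bound hg.aestronglyMeasurable C <|
      (ae_restrict_mem measurableSet_Ioc).mono fun x hx => hC x (Ioc_subset_Icc_self hx)
  exact htop.mono_exponent le_top

lemma sobLp_eq_lpNorm {m : ℕ} {v : ℝ → ℝ} (hv : Continuous (iteratedDeriv m v)) :
    sobLp m p v = lpNorm (iteratedDeriv m v) p periodMeasure :=
  toReal_eLpNorm hv.aestronglyMeasurable

lemma lpNorm_periodMeasure_le {C : ℝ} (hC : 0 ≤ C) (hg : ∀ x ∈ Icc 0 1, ‖g x‖ ≤ C) :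
    lpNorm g p periodMeasure ≤ C :=
  lpNorm_le_of_ae_bound hC <|
    (ae_restrict_mem measurableSet_Ioc).mono fun x hx => hg x (Ioc_subset_Icc_self hx)

lemma norm_le_lpNorm_top_periodMeasure (hg : Continuous g) (hper : Function.Periodic g 1)
    (x : ℝ) : ‖g x‖ ≤ lpNorm g ∞ periodMeasure := by
  set C := lpNorm g ∞ periodMeasure
  have hae : (fun y => max ‖g y‖ C) =ᵐ[periodMeasure] fun _ => C :=
    (ae_le_lpNorm_exponent_top (memLp_periodMeasure hg)).mono fun y hy => max_eq_right hy
  have heq := Measure.eqOn_Ioc_of_ae_eq volume hae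
    (hg.norm.max continuous_const).continuousOn continuousOn_const
  obtain ⟨y, hy, hxy⟩ := hper.exists_mem_Ioc one_pos x 0
  rw [zero_add] at hy
  rw [hxy, ← max_eq_right_iff]
  exact heq hy

lemma lpNorm_periodMeasure_pos (hp : p ≠ 0) (hg : Continuous g) (hper : Function.Periodic g 1)
    (hne : ∃ x, g x ≠ 0) : 0 < lpNorm g p periodMeasure := by
  obtain ⟨x, hx⟩ := hne
  refine lpNorm_nonneg.lt_of_ne' fun hzero => hx ?_
  have hae : g =ᵐ[periodMeasure] 0 := (lpNorm_eq_zero (memLp_periodMeasure hg) hp).1 hzero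
  have htop : lpNorm g ∞ periodMeasure = 0 :=
    (lpNorm_eq_zero (memLp_periodMeasure hg) ENNReal.top_ne_zero).2 hae
  exact norm_le_zero_iff.1 (htop ▸ norm_le_lpNorm_top_periodMeasure hg hper x)

lemma lpNorm_two_sq_periodMeasure {w : ℝ → ℝ} (hw : Continuous w) :
    lpNorm w 2 periodMeasure ^ 2 = ∫ x in 0..1, w x ^ 2 := by
  rw [lpNorm_two_sq hw.aestronglyMeasurable, intervalIntegral.integral_of_le zero_le_one]

lemma continuousOn_lpNorm_periodMeasure {X : Type*} [TopologicalSpace X] {s : Set X}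
    {G : X → ℝ → E} (hG : ContinuousOn (Function.uncurry G) (s ×ˢ univ)) (hp : 1 ≤ p) :
    ContinuousOn (fun t => lpNorm (G t) p periodMeasure) s := by
  have hslice : ∀ t ∈ s, Continuous (G t) := fun t ht =>
    hG.comp_continuous (.prodMk_right t) fun x => ⟨ht, mem_univ x⟩
  intro t ht
  refine Metric.continuousWithinAt_iff'.2 fun ε hε => ?_
  obtain ⟨V, hV, hclose⟩ := isCompact_Icc.mem_uniformity_of_prod
    (hG.mono (prod_mono_right (subset_univ (Icc (0 : ℝ) 1)))) ht
    (Metric.dist_mem_uniformity (half_pos hε))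
  filter_upwards [hV, self_mem_nhdsWithin] with r hr hrs
  have hsub : lpNorm (G r - G t) p periodMeasure ≤ ε / 2 :=
    lpNorm_periodMeasure_le (half_pos hε).le fun x hx => by
      simpa only [Pi.sub_apply, ← dist_eq_norm] using (hclose r hr x hx).le
  have hr_le := lpNorm_le_lpNorm_add_lpNorm_sub' (f := G r)
    (memLp_periodMeasure (hslice t ht)) hp
  have ht_le := lpNorm_le_lpNorm_add_lpNorm_sub (f := G t)
    (memLp_periodMeasure (hslice r hrs)) hp
  rw [Real.dist_eq, abs_lt]
  constructor <;> linarith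

end PeriodMeasure

section IteratedDerivatives

variable {F : Type*} [NormedAddCommGroup F] [NormedSpace ℝ F] {v : ℝ → F} {c : ℝ}

lemma contDiff_iteratedDeriv (hv : ContDiff ℝ (⊤ : ℕ∞) v) (k : ℕ) :
    ContDiff ℝ (⊤ : ℕ∞) (iteratedDeriv k v) := by
  rw [iteratedDeriv_eq_iterate]
  exact hv.iterate_deriv k

lemma hasDerivAt_deriv_of_contDiff (hv : ContDiff ℝ 2 v) (x : ℝ) :
    HasDerivAt (deriv v) (iteratedDeriv 2 v x) x := by
  rw [iteratedDeriv_succ, iteratedDeriv_one]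
  exact ((hv.deriv' (n := 1)).differentiable one_ne_zero x).hasDerivAt

lemma periodic_deriv (hv : Function.Periodic v c) : Function.Periodic (deriv v) c := fun x => by
  rw [← deriv_comp_add_const, funext hv]

lemma periodic_iteratedDeriv (hv : Function.Periodic v c) (k : ℕ) :
    Function.Periodic (iteratedDeriv k v) c := by
  induction k with
  | zero => rwa [iteratedDeriv_zero]
  | succ k ih => simpa only [iteratedDeriv_succ] using periodic_deriv ih

end IteratedDerivatives

section Interpolation

variable {V v : ℝ → ℝ} {p : ℝ≥0∞} {ρ : ℝ}

lemma abs_deriv_le_div_add_integral_norm (hV : ContDiff ℝ 2 V) {a b x B : ℝ} (hab : a < b)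
    (hB : |V b - V a| ≤ B) (hx : x ∈ Icc a b) :
    |deriv V x| ≤ B / (b - a) + ∫ y in a..b, ‖deriv (deriv V) y‖ := by
  have hV' : ContDiff ℝ 1 (deriv V) := hV.deriv' (n := 1)
  have hV'' : Continuous (deriv (deriv V)) := hV'.continuous_deriv le_rfl
  obtain ⟨ξ, hξ, hslope⟩ := exists_deriv_eq_slope V hab hV.continuous.continuousOn
    (hV.differentiable two_ne_zero).differentiableOn
  have hξ_le : |deriv V ξ| ≤ B / (b - a) := by
    rw [hslope, abs_div, abs_of_pos (sub_pos.2 hab)]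
    exact div_le_div_of_nonneg_right hB (sub_pos.2 hab).le
  have hsub : uIoc ξ x ⊆ uIoc a b := by
    rw [uIoc_of_le hab.le]
    exact Ioc_subset_Ioc (le_min hξ.1.le hx.1) (max_le hξ.2.le hx.2)
  have hdiff : |deriv V x - deriv V ξ| ≤ ∫ y in a..b, ‖deriv (deriv V) y‖ :=
    calc |deriv V x - deriv V ξ| = ‖∫ y in ξ..x, deriv (deriv V) y‖ := by
          rw [intervalIntegral.integral_deriv_eq_sub
            (fun y _ => hV'.differentiable one_ne_zero y) (hV''.intervalIntegrable _ _),
            Real.norm_eq_abs]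
      _ ≤ |∫ y in ξ..x, ‖deriv (deriv V) y‖| :=
        intervalIntegral.norm_integral_le_abs_integral_norm
      _ ≤ |∫ y in a..b, ‖deriv (deriv V) y‖| :=
        intervalIntegral.abs_integral_mono_interval hsub (.of_forall fun _ => abs_nonneg _)
          (hV''.abs.intervalIntegrable _ _)
      _ = ∫ y in a..b, ‖deriv (deriv V) y‖ :=
        abs_of_nonneg (intervalIntegral.integral_nonneg hab.le fun _ _ => abs_nonneg _)
  have htriangle := abs_sub_abs_le_abs_sub (deriv V x) (deriv V ξ)
  linarith

lemma lpNorm_top_deriv_le_div_add (hV : ContDiff ℝ 2 V) (hp : 1 ≤ p) {h B : ℝ} (h0 : 0 < h)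
    (h1 : h ≤ 1) (hB : ∀ a, |V (a + h) - V a| ≤ B) :
    lpNorm (deriv V) ∞ periodMeasure ≤
      B / h + h ^ (1 - (1 / p).toReal) * lpNorm (deriv (deriv V)) p periodMeasure := by
  have hV'' : Continuous (deriv (deriv V)) := (hV.deriv' (n := 1)).continuous_deriv le_rfl
  have hB0 : 0 ≤ B := (abs_nonneg _).trans (hB 0)
  refine lpNorm_periodMeasure_le
    (add_nonneg (by positivity) (mul_nonneg (by positivity) lpNorm_nonneg)) fun x hx => ?_
  -- the window of length `h` that sits in `[0, 1]` as `x` does and contains `x`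
  set a := x * (1 - h)
  have hwindow : Ioc a (a + h) ⊆ Ioc 0 1 :=
    Ioc_subset_Ioc (mul_nonneg hx.1 (sub_nonneg.2 h1)) (by nlinarith [hx.2])
  have hmass : periodMeasure.real (Ioc a (a + h)) = h := by
    rw [measureReal_restrict_apply measurableSet_Ioc, inter_eq_left.2 hwindow,
      Real.volume_real_Ioc, add_sub_cancel_left, max_eq_left h0.le]
  have hholder := setIntegral_norm_le_rpow_mul_lpNorm hp (memLp_periodMeasure hV'')
    (measure_ne_top periodMeasure (Ioc a (a + h)))
  rw [hmass, Measure.restrict_restrict measurableSet_Ioc, inter_eq_left.2 hwindow,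
    ← intervalIntegral.integral_of_le (le_add_of_nonneg_right h0.le)] at hholder
  have hpoint := abs_deriv_le_div_add_integral_norm hV (lt_add_of_pos_right a h0) (hB a)
    (x := x) ⟨by nlinarith [hx.1], by nlinarith [hx.2]⟩
  rw [add_sub_cancel_left] at hpoint
  exact hpoint.trans (add_le_add_right hholder _)

/-- If `V` oscillates on the length scale `1 / ρ`, differentiating once more costs a factor
`ρ ^ (1 - 1 / p)`: apply the preceding interpolation inequality at distance `4 / ρ`, or over a
whole period when `ρ ≤ 4`. -/
lemma rpow_mul_lpNorm_top_deriv_le (hV : ContDiff ℝ 2 V) (hper : Function.Periodic V 1)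
    (hp : 1 ≤ p) (hρ : 0 < ρ)
    (hosc : ρ * lpNorm V ∞ periodMeasure ≤ lpNorm (deriv V) ∞ periodMeasure) :
    (ρ / 4) ^ (1 - (1 / p).toReal) * lpNorm (deriv V) ∞ periodMeasure ≤
      2 * lpNorm (deriv (deriv V)) p periodMeasure := by
  set e := 1 - (1 / p).toReal
  have he : 0 ≤ e := sub_nonneg.2 (toReal_one_div_le_one hp)
  obtain hρ4 | hρ4 := le_total ρ 4
  · have hle := lpNorm_top_deriv_le_div_add hV hp one_pos le_rfl (B := 0) fun a => by
      rw [hper a, sub_self, abs_zero]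
    rw [zero_div, zero_add, Real.one_rpow, one_mul] at hle
    calc (ρ / 4) ^ e * lpNorm (deriv V) ∞ periodMeasure
        ≤ 1 * lpNorm (deriv V) ∞ periodMeasure := by
          gcongr
          exacts [lpNorm_nonneg, Real.rpow_le_one (by positivity) (by linarith) he]
      _ ≤ _ := by linarith [lpNorm_nonneg (f := deriv V) (p := ∞) (μ := periodMeasure)]
  · have hV_le := norm_le_lpNorm_top_periodMeasure hV.continuous hper
    have hle := lpNorm_top_deriv_le_div_add hV hp (h := 4 / ρ)
      (B := 2 * lpNorm V ∞ periodMeasure) (by positivity) ((div_le_one hρ).2 hρ4) fun a =>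
        (norm_sub_le (V (a + 4 / ρ)) (V a)).trans (by linarith [hV_le (a + 4 / ρ), hV_le a])
    have habsorb : 2 * lpNorm V ∞ periodMeasure / (4 / ρ) ≤
        lpNorm (deriv V) ∞ periodMeasure / 2 := by
      rw [div_div_eq_mul_div]
      linarith
    have hhalf : lpNorm (deriv V) ∞ periodMeasure ≤
        2 * ((4 / ρ) ^ e * lpNorm (deriv (deriv V)) p periodMeasure) := by linarith [hle, habsorb]
    calc (ρ / 4) ^ e * lpNorm (deriv V) ∞ periodMeasure
        ≤ (ρ / 4) ^ e * (2 * ((4 / ρ) ^ e * lpNorm (deriv (deriv V)) p periodMeasure)) := by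
          gcongr
      _ = 2 * lpNorm (deriv (deriv V)) p periodMeasure := by
          rw [mul_left_comm, ← mul_assoc _ ((4 / ρ) ^ e), ← inv_div ρ 4,
            Real.inv_rpow (by positivity), mul_inv_cancel₀ (by positivity), one_mul]

lemma mul_lpNorm_top_iteratedDeriv_le_succ (hv : ContDiff ℝ (⊤ : ℕ∞) v)
    (hper : Function.Periodic v 1) (hρ : 0 < ρ)
    (hosc : ρ * lpNorm v ∞ periodMeasure ≤ lpNorm (deriv v) ∞ periodMeasure) (k : ℕ) :
    ρ / 8 ^ k * lpNorm (iteratedDeriv k v) ∞ periodMeasure ≤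
      lpNorm (iteratedDeriv (k + 1) v) ∞ periodMeasure := by
  induction k with
  | zero => simpa using hosc
  | succ k ih =>
    rw [iteratedDeriv_succ] at ih
    have hstep := rpow_mul_lpNorm_top_deriv_le (contDiff_infty.1 (contDiff_iteratedDeriv hv k) 2)
      (periodic_iteratedDeriv hper k) le_top (by positivity) ih
    rw [← iteratedDeriv_succ, ← iteratedDeriv_succ, ENNReal.div_top, ENNReal.toReal_zero, sub_zero,
      Real.rpow_one] at hstep
    linear_combination hstep / 2

lemma exists_mul_pow_mul_lpNorm_top_deriv_le (k : ℕ) :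
    ∃ c > 0, ∀ v : ℝ → ℝ, ContDiff ℝ (⊤ : ℕ∞) v → Function.Periodic v 1 → ∀ ρ > 0,
      ρ * lpNorm v ∞ periodMeasure ≤ lpNorm (deriv v) ∞ periodMeasure →
        c * ρ ^ k * lpNorm (deriv v) ∞ periodMeasure ≤
          lpNorm (iteratedDeriv (k + 1) v) ∞ periodMeasure := by
  induction k with
  | zero => exact ⟨1, one_pos, fun v _ _ ρ _ _ => by simp⟩
  | succ k ih =>
    obtain ⟨c, hc, hle⟩ := ih
    refine ⟨c / 8 ^ (k + 1), by positivity, fun v hv hper ρ hρ hosc => ?_⟩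
    calc c / 8 ^ (k + 1) * ρ ^ (k + 1) * lpNorm (deriv v) ∞ periodMeasure
        = ρ / 8 ^ (k + 1) * (c * ρ ^ k * lpNorm (deriv v) ∞ periodMeasure) := by ring
      _ ≤ ρ / 8 ^ (k + 1) * lpNorm (iteratedDeriv (k + 1) v) ∞ periodMeasure := by
          gcongr
          exact hle v hv hper ρ hρ hosc
      _ ≤ _ := mul_lpNorm_top_iteratedDeriv_le_succ hv hper hρ hosc (k + 1)

lemma exists_mul_rpow_mul_lpNorm_top_deriv_le (hp : 1 ≤ p) (k : ℕ) :
    ∃ c > 0, ∀ v : ℝ → ℝ, ContDiff ℝ (⊤ : ℕ∞) v → Function.Periodic v 1 → ∀ ρ > 0,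
      ρ * lpNorm v ∞ periodMeasure ≤ lpNorm (deriv v) ∞ periodMeasure →
        c * ρ ^ ((k + 1 : ℝ) - (1 / p).toReal) * lpNorm (deriv v) ∞ periodMeasure ≤
          lpNorm (iteratedDeriv (k + 2) v) p periodMeasure := by
  obtain ⟨c, hc, hle⟩ := exists_mul_pow_mul_lpNorm_top_deriv_le k
  set e := 1 - (1 / p).toReal
  refine ⟨c * (1 / (8 ^ k * 4)) ^ e / 2, by positivity, fun v hv hper ρ hρ hosc => ?_⟩
  have hgrowth := mul_lpNorm_top_iteratedDeriv_le_succ hv hper hρ hosc k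
  rw [iteratedDeriv_succ] at hgrowth
  have hstep := rpow_mul_lpNorm_top_deriv_le (contDiff_infty.1 (contDiff_iteratedDeriv hv k) 2)
    (periodic_iteratedDeriv hper k) hp (by positivity) hgrowth
  have hexp : ρ ^ ((k + 1 : ℝ) - (1 / p).toReal) = ρ ^ k * ρ ^ e := by
    rw [add_sub_assoc, Real.rpow_add hρ, Real.rpow_natCast]
  have hscale : (ρ / 8 ^ k / 4) ^ e = (1 / (8 ^ k * 4)) ^ e * ρ ^ e := by
    rw [← Real.mul_rpow (by positivity) hρ.le]
    congr 1
    ring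
  rw [← iteratedDeriv_succ, ← iteratedDeriv_succ, hscale] at hstep
  have hbase := mul_le_mul_of_nonneg_left (hle v hv hper ρ hρ hosc)
    (by positivity : 0 ≤ (1 / (8 ^ k * 4)) ^ e * ρ ^ e)
  rw [hexp]
  linarith

end Interpolation

/-- The constraints that a solution satisfies at a time of strong dissipation, with constants
`D`, `M`, `lam` independent of the viscosity `ν`: the amplitude and the total variation are of order
one, the slope is at most of order `1 / ν`, and the dissipation `‖v'‖₂²` is at least of order
`1 / ν`. -/
structure IsDissipativeProfile (D M lam ν : ℝ) (v : ℝ → ℝ) : Prop where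
  contDiff : ContDiff ℝ (⊤ : ℕ∞) v
  periodic : Function.Periodic v 1
  lpNorm_top_le : lpNorm v ∞ periodMeasure ≤ D
  lpNorm_one_deriv_le : lpNorm (deriv v) 1 periodMeasure ≤ 2 * D
  lpNorm_top_deriv_le : lpNorm (deriv v) ∞ periodMeasure ≤ M / ν
  le_lpNorm_two_deriv_sq : lam / ν ≤ lpNorm (deriv v) 2 periodMeasure ^ 2

namespace IsDissipativeProfile

variable {D M lam ν : ℝ} {v : ℝ → ℝ} {p : ℝ≥0∞}

lemma memLp_deriv (hv : IsDissipativeProfile D M lam ν v) : MemLp (deriv v) p periodMeasure :=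
  memLp_periodMeasure (hv.contDiff.continuous_deriv (mod_cast le_top))

lemma div_le_lpNorm_top_deriv (hv : IsDissipativeProfile D M lam ν v) (hD : 0 < D) :
    lam / (2 * D) / ν ≤ lpNorm (deriv v) ∞ periodMeasure := by
  rw [div_right_comm, div_le_iff₀ (by positivity)]
  calc lam / ν ≤ lpNorm (deriv v) 2 periodMeasure ^ 2 := hv.le_lpNorm_two_deriv_sq
    _ ≤ lpNorm (deriv v) ∞ periodMeasure * lpNorm (deriv v) 1 periodMeasure :=
      lpNorm_two_sq_le_lpNorm_top_mul_lpNorm_one hv.memLp_deriv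
    _ ≤ _ := mul_le_mul_of_nonneg_left hv.lpNorm_one_deriv_le lpNorm_nonneg

lemma mul_lpNorm_top_le_lpNorm_top_deriv (hv : IsDissipativeProfile D M lam ν v) (hD : 0 < D)
    (hlam : 0 < lam) (hν : 0 < ν) :
    lam / (2 * D ^ 2) / ν * lpNorm v ∞ periodMeasure ≤ lpNorm (deriv v) ∞ periodMeasure :=
  calc lam / (2 * D ^ 2) / ν * lpNorm v ∞ periodMeasure
      ≤ lam / (2 * D ^ 2) / ν * D := by gcongr; exact hv.lpNorm_top_le
    _ = lam / (2 * D) / ν := by field_simp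
    _ ≤ _ := hv.div_le_lpNorm_top_deriv hD

lemma mul_rpow_le_lpNorm_deriv (hv : IsDissipativeProfile D M lam ν v) (hp : 1 ≤ p) (hD : 0 < D)
    (hM : 0 < M) (hlam : 0 < lam) (hν : 0 < ν) :
    lam / (2 * M) / (8 * D ^ 2 / lam) ^ (1 - (1 / p).toReal) * ν ^ (-(1 - (1 / p).toReal)) ≤
      lpNorm (deriv v) p periodMeasure := by
  set e := 1 - (1 / p).toReal
  set N := lpNorm (deriv v) p periodMeasure
  have he : 0 ≤ e := sub_nonneg.2 (toReal_one_div_le_one hp)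
  have hN : 0 ≤ N := lpNorm_nonneg
  have hone : 0 ≤ lpNorm (deriv v) 1 periodMeasure := lpNorm_nonneg
  have hl : 0 < lam / (4 * D * ν) := by positivity
  have hkey : lam / (2 * ν) ≤ M / ν * ((8 * D ^ 2 / lam) ^ e * ν ^ e * N) :=
    calc lam / (2 * ν) = lam / ν - lam / (4 * D * ν) * (2 * D) := by field_simp; ring
      _ ≤ lpNorm (deriv v) 2 periodMeasure ^ 2
          - lam / (4 * D * ν) * lpNorm (deriv v) 1 periodMeasure := by
        gcongr
        exacts [hv.le_lpNorm_two_deriv_sq, hv.lpNorm_one_deriv_le]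
      _ ≤ lpNorm (deriv v) ∞ periodMeasure *
          ((lpNorm (deriv v) 1 periodMeasure / (lam / (4 * D * ν))) ^ e * N) :=
        lpNorm_two_sq_sub_le_mul_lpNorm hp hv.memLp_deriv hl
      _ ≤ M / ν * ((2 * D / (lam / (4 * D * ν))) ^ e * N) := by
        gcongr
        exacts [hv.lpNorm_top_deriv_le, hv.lpNorm_one_deriv_le]
      _ = M / ν * ((8 * D ^ 2 / lam) ^ e * ν ^ e * N) := by
        rw [← Real.mul_rpow (by positivity) hν.le]
        congr 3
        field_simp
        ring
  rw [Real.rpow_neg hν.le, ← div_eq_mul_inv, div_div, div_div, div_le_iff₀ (by positivity)]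
  rw [div_le_iff₀ (by positivity)] at hkey
  refine hkey.trans_eq ?_
  field_simp

theorem exists_mul_rpow_le_sobLp (hp : 1 ≤ p) (hD : 0 < D) (hM : 0 < M) (hlam : 0 < lam) {m : ℕ}
    (hm : m ≠ 0) :
    ∃ c > 0, ∀ ν > 0, ∀ v, IsDissipativeProfile D M lam ν v →
      c * ν ^ (-(m - (1 / p).toReal)) ≤ sobLp m p v := by
  obtain rfl | ⟨k, rfl⟩ : m = 1 ∨ ∃ k, m = k + 2 := by
    obtain _ | _ | k := m
    exacts [absurd rfl hm, .inl rfl, .inr ⟨k, rfl⟩]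
  · refine ⟨lam / (2 * M) / (8 * D ^ 2 / lam) ^ (1 - (1 / p).toReal), by positivity,
      fun ν hν v hv => ?_⟩
    rw [sobLp_eq_lpNorm (contDiff_iteratedDeriv hv.contDiff 1).continuous,
      iteratedDeriv_one, Nat.cast_one]
    exact hv.mul_rpow_le_lpNorm_deriv hp hD hM hlam hν
  · obtain ⟨c, hc, hle⟩ := exists_mul_rpow_mul_lpNorm_top_deriv_le hp k
    set e := (k + 1 : ℝ) - (1 / p).toReal
    refine ⟨c * (lam / (2 * D ^ 2)) ^ e * (lam / (2 * D)), by positivity, fun ν hν v hv => ?_⟩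
    rw [sobLp_eq_lpNorm (contDiff_iteratedDeriv hv.contDiff (k + 2)).continuous]
    have hexp : -(((k + 2 : ℕ) : ℝ) - (1 / p).toReal) = -e - 1 := by
      push_cast
      ring
    calc _ = c * (lam / (2 * D ^ 2) / ν) ^ e * (lam / (2 * D) / ν) := by
          rw [hexp, Real.rpow_sub_one hν.ne', Real.rpow_neg hν.le,
            Real.div_rpow (by positivity) hν.le]
          ring
      _ ≤ c * (lam / (2 * D ^ 2) / ν) ^ e * lpNorm (deriv v) ∞ periodMeasure := by
          gcongr
          exact hv.div_le_lpNorm_top_deriv hD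
      _ ≤ _ := hle v hv.contDiff hv.periodic _ (by positivity)
          (hv.mul_lpNorm_top_le_lpNorm_top_deriv hD hlam hν)

end IsDissipativeProfile

section PartialDerivatives

variable {E : Type*} [NormedAddCommGroup E] [NormedSpace ℝ E] {F : ℝ × ℝ → E}
  {F' : ℝ × ℝ →L[ℝ] E} {t x : ℝ}

lemma hasDerivAt_slice_fst (hF : HasFDerivAt F F' (t, x)) :
    HasDerivAt (fun s => F (s, x)) (F' (1, 0)) t :=
  hF.comp_hasDerivAt t ((hasDerivAt_id t).prodMk (hasDerivAt_const t x))

lemma hasDerivAt_slice_snd (hF : HasFDerivAt F F' (t, x)) :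
    HasDerivAt (fun y => F (t, y)) (F' (0, 1)) x :=
  hF.comp_hasDerivAt x ((hasDerivAt_const x t).prodMk (hasDerivAt_id x))

lemma deriv_deriv_slice_comm (hF : ContDiffAt ℝ 2 F (t, x)) :
    deriv (fun s => deriv (fun y => F (s, y)) x) t =
      deriv (fun y => deriv (fun s => F (s, y)) t) x := by
  have hsymm : IsSymmSndFDerivAt ℝ F (t, x) :=
    hF.isSymmSndFDerivAt minSmoothness_of_isRCLikeNormedField.le
  have hF'' : HasFDerivAt (fderiv ℝ F) (fderiv ℝ (fderiv ℝ F) (t, x)) (t, x) :=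
    ((hF.fderiv_right (m := 1) le_rfl).differentiableAt one_ne_zero).hasFDerivAt
  have hnear : ∀ᶠ q in nhds (t, x), HasFDerivAt F (fderiv ℝ F q) q :=
    (hF.eventually (by simp)).mono fun q hq => (hq.differentiableAt two_ne_zero).hasFDerivAt
  have hfst : HasDerivAt (fun s => deriv (fun y => F (s, y)) x)
      (fderiv ℝ (fderiv ℝ F) (t, x) (1, 0) (0, 1)) t := by
    have hderiv := (hasDerivAt_slice_fst hF'').clm_apply (hasDerivAt_const t ((0 : ℝ), (1 : ℝ)))
    rw [map_zero, add_zero] at hderiv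
    refine hderiv.congr_of_eventuallyEq ?_
    filter_upwards [(Continuous.prodMk_left x).continuousAt.eventually hnear] with s hs
    exact (hasDerivAt_slice_snd hs).deriv
  have hsnd : HasDerivAt (fun y => deriv (fun s => F (s, y)) t)
      (fderiv ℝ (fderiv ℝ F) (t, x) (0, 1) (1, 0)) x := by
    have hderiv := (hasDerivAt_slice_snd hF'').clm_apply (hasDerivAt_const x ((1 : ℝ), (0 : ℝ)))
    rw [map_zero, add_zero] at hderiv
    refine hderiv.congr_of_eventuallyEq ?_
    filter_upwards [(Continuous.prodMk_right t).continuousAt.eventually hnear] with y hy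
    exact (hasDerivAt_slice_fst hy).deriv
  rw [hfst.deriv, hsnd.deriv, hsymm]

end PartialDerivatives

/-- Smoothness, up to the boundary `t = 0`, of a function `g t x` of time and space on the closed
half-space `t ≥ 0`; values at negative times are irrelevant. -/
abbrev SmoothOnHalfSpace {E : Type*} [NormedAddCommGroup E] [NormedSpace ℝ E] (g : ℝ → ℝ → E) :
    Prop :=
  ContDiffOn ℝ (⊤ : ℕ∞) (Function.uncurry g) (Ici 0 ×ˢ univ)

namespace SmoothOnHalfSpace

variable {E : Type*} [NormedAddCommGroup E] [NormedSpace ℝ E] {g : ℝ → ℝ → E} {t : ℝ}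

lemma contDiff (hg : SmoothOnHalfSpace g) (ht : 0 ≤ t) : ContDiff ℝ (⊤ : ℕ∞) (g t) :=
  contDiffOn_univ.1 <|
    hg.comp (contDiff_const.prodMk contDiff_id).contDiffOn fun y _ => ⟨ht, mem_univ y⟩

lemma differentiable (hg : SmoothOnHalfSpace g) (ht : 0 ≤ t) : Differentiable ℝ (g t) :=
  (hg.contDiff ht).differentiable (by simp)

lemma contDiffAt (hg : SmoothOnHalfSpace g) (ht : 0 < t) (x : ℝ) :
    ContDiffAt ℝ (⊤ : ℕ∞) (Function.uncurry g) (t, x) :=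
  ContDiffOn.contDiffAt hg (prod_mem_nhds (Ici_mem_nhds ht) Filter.univ_mem)

lemma differentiableAt_time (hg : SmoothOnHalfSpace g) (ht : 0 < t) (x : ℝ) :
    DifferentiableAt ℝ (fun s => g s x) t :=
  (hasDerivAt_slice_fst
    ((hg.contDiffAt ht x).differentiableAt (by simp)).hasFDerivAt).differentiableAt

lemma deriv_space (hg : SmoothOnHalfSpace g) : SmoothOnHalfSpace fun t => deriv (g t) := by
  have huniq : UniqueDiffOn ℝ (Ici (0 : ℝ) ×ˢ (univ : Set ℝ)) :=
    (uniqueDiffOn_Ici 0).prod uniqueDiffOn_univ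
  have hF' : ContDiffOn ℝ (⊤ : ℕ∞) (fun q => fderivWithin ℝ (Function.uncurry g)
      (Ici 0 ×ˢ univ) q (0, 1)) (Ici 0 ×ˢ univ) :=
    (ContDiffOn.fderivWithin hg huniq (by simp)).clm_apply contDiffOn_const
  refine hF'.congr fun ⟨t, x⟩ ht => ?_
  have hslice : HasDerivWithinAt (fun y : ℝ => (t, y)) ((0 : ℝ), (1 : ℝ)) univ x :=
    ((hasDerivAt_const x t).prodMk (hasDerivAt_id x)).hasDerivWithinAt
  have hwithin := ((ContDiffOn.differentiableOn hg (by simp)) _ ht).hasFDerivWithinAt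
  exact (hasDerivWithinAt_univ.1 <|
    hwithin.comp_hasDerivWithinAt x hslice fun y _ => ⟨ht.1, mem_univ y⟩).deriv

lemma iteratedDeriv_space (hg : SmoothOnHalfSpace g) (k : ℕ) :
    SmoothOnHalfSpace fun t => iteratedDeriv k (g t) := by
  induction k with
  | zero => simpa only [iteratedDeriv_zero] using hg
  | succ k ih => simpa only [iteratedDeriv_succ] using ih.deriv_space

lemma deriv_time_deriv_space (hg : SmoothOnHalfSpace g) (ht : 0 < t) (x : ℝ) :
    deriv (fun s => deriv (g s) x) t = deriv (fun y => deriv (fun s => g s y) t) x :=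
  deriv_deriv_slice_comm (contDiffAt_infty.1 (hg.contDiffAt ht x) 2)

lemma continuousOn_sobLp {u : ℝ → ℝ → ℝ} (hu : SmoothOnHalfSpace u) (m : ℕ) {p : ℝ≥0∞}
    (hp : 1 ≤ p) : ContinuousOn (fun t => sobLp m p (u t)) (Ici 0) :=
  (continuousOn_lpNorm_periodMeasure (hu.iteratedDeriv_space m).continuousOn hp).congr fun _ ht =>
    sobLp_eq_lpNorm ((hu.iteratedDeriv_space m).contDiff ht).continuous

end SmoothOnHalfSpace

section MaximumPrinciple

lemma exists_forall_le_of_isCompact_of_periodic {X : Type*} [TopologicalSpace X] {s : Set X}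
    (hs : IsCompact s) (hne : s.Nonempty) {g : X → ℝ → ℝ}
    (hg : ContinuousOn (Function.uncurry g) (s ×ˢ univ)) {L : ℝ} (hL : 0 < L)
    (hper : ∀ t ∈ s, Function.Periodic (g t) L) : ∃ t ∈ s, ∃ x, ∀ r ∈ s, ∀ y, g r y ≤ g t x := by
  obtain ⟨⟨t, x⟩, ⟨ht, -⟩, hmax⟩ := (hs.prod isCompact_Icc).exists_isMaxOn
    (hne.prod (nonempty_Icc.2 hL.le)) (hg.mono (prod_mono_right (subset_univ (Icc 0 L))))
  refine ⟨t, ht, x, fun r hr y => ?_⟩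
  obtain ⟨z, hz, hyz⟩ := (hper r hr).exists_mem_Ico₀ hL y
  rw [hyz]
  exact hmax (mk_mem_prod hr (Ico_subset_Icc_self hz))

lemma deriv_deriv_nonpos_of_isLocalMax {φ : ℝ → ℝ} {x : ℝ} (hφ : ContinuousAt φ x)
    (hmax : IsLocalMax φ x) : deriv (deriv φ) x ≤ 0 := by
  by_contra! hpos
  have hmin : IsLocalMin φ x := isLocalMin_of_deriv_deriv_pos hpos hmax.deriv_eq_zero hφ
  have hconst : φ =ᶠ[nhds x] fun _ => φ x := by
    filter_upwards [hmin, hmax] with y hy_ge hy_le using le_antisymm hy_le hy_ge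
  rw [hconst.deriv.deriv_eq, deriv_const', deriv_const] at hpos
  exact hpos.false

lemma deriv_nonneg_of_isMaxOn_Icc_right {φ : ℝ → ℝ} {a t : ℝ} (hat : a < t)
    (hmax : IsMaxOn φ (Icc a t) t) : 0 ≤ deriv φ t := by
  by_cases hφ : DifferentiableAt ℝ φ t
  · refine ge_of_tendsto (hφ.hasDerivAt.tendsto_slope.mono_left (nhdsLT_le_nhdsNE t)) ?_
    filter_upwards [Ioo_mem_nhdsLT hat] with s hs
    rw [slope_def_field]
    exact div_nonneg_of_nonpos (sub_nonpos.2 (hmax (Ioo_subset_Icc_self hs)))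
      (sub_nonpos.2 hs.2.le)
  · rw [deriv_zero_of_not_differentiableAt hφ]

variable {g : ℝ → ℝ → ℝ} {K L t : ℝ}

/-- Subtracting `ε * t` makes the time derivative strictly negative where the hypothesis bounds it
by zero, so the maximum of `g t x - ε * t` is not attained where `g` exceeds `K`. -/
lemma le_add_mul_of_deriv_nonpos_of_isLocalMax (hL : 0 < L)
    (hg : ContinuousOn (Function.uncurry g) (Ici 0 ×ˢ univ))
    (hdiff : ∀ t > 0, ∀ x, DifferentiableAt ℝ (fun s => g s x) t)
    (hper : ∀ t ≥ 0, Function.Periodic (g t) L) (h0 : ∀ x, g 0 x ≤ K)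
    (hmax : ∀ t > 0, ∀ x, K < g t x → IsLocalMax (g t) x → deriv (fun s => g s x) t ≤ 0)
    (ht : 0 ≤ t) (x : ℝ) {ε : ℝ} (hε : 0 < ε) : g t x ≤ K + ε * t := by
  have hcont : ContinuousOn (Function.uncurry fun s y => g s y - ε * s) (Icc 0 t ×ˢ univ) :=
    (hg.mono (prod_mono_left Icc_subset_Ici_self)).sub (by fun_prop)
  obtain ⟨τ, hτ, z, hz⟩ := exists_forall_le_of_isCompact_of_periodic isCompact_Icc
    (nonempty_Icc.2 ht) hcont hL fun s hs y => by simp only [hper s hs.1 y]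
  have hle : g τ z ≤ K := by
    by_contra! hlt
    have hτ_pos : 0 < τ := hτ.1.lt_of_ne fun h => (hlt.trans_le (h ▸ h0 z)).false
    have hleft : IsMaxOn (fun s => g s z - ε * s) (Icc 0 τ) τ := fun s hs =>
      hz s ⟨hs.1, hs.2.trans hτ.2⟩ z
    have hslope := deriv_nonneg_of_isMaxOn_Icc_right hτ_pos hleft
    rw [deriv_fun_sub (hdiff τ hτ_pos z) (by fun_prop), deriv_const_mul_id'] at hslope
    have hlocal : IsLocalMax (g τ) z := .of_forall fun y => by linarith [hz τ hτ y]
    linarith [hmax τ hτ_pos z hlt hlocal]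
  have hx := hz t (right_mem_Icc.2 ht) x
  linarith [mul_nonneg hε.le hτ.1]

theorem le_of_deriv_nonpos_of_isLocalMax (hL : 0 < L)
    (hg : ContinuousOn (Function.uncurry g) (Ici 0 ×ˢ univ))
    (hdiff : ∀ t > 0, ∀ x, DifferentiableAt ℝ (fun s => g s x) t)
    (hper : ∀ t ≥ 0, Function.Periodic (g t) L) (h0 : ∀ x, g 0 x ≤ K)
    (hmax : ∀ t > 0, ∀ x, K < g t x → IsLocalMax (g t) x → deriv (fun s => g s x) t ≤ 0)
    (ht : 0 ≤ t) (x : ℝ) : g t x ≤ K := by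
  refine le_of_forall_pos_le_add fun ε hε => ?_
  have hle := le_add_mul_of_deriv_nonpos_of_isLocalMax hL hg hdiff hper h0 hmax ht x
    (ε := ε / (t + 1)) (by positivity)
  have hsmall : ε / (t + 1) * t ≤ ε := by
    rw [div_mul_eq_mul_div, div_le_iff₀ (by positivity)]
    linarith
  linarith

theorem abs_le_of_deriv_eq_mul_deriv_deriv (hL : 0 < L)
    (hg : ContinuousOn (Function.uncurry g) (Ici 0 ×ˢ univ))
    (hdiff : ∀ t > 0, ∀ x, DifferentiableAt ℝ (fun s => g s x) t)
    (hper : ∀ t ≥ 0, Function.Periodic (g t) L) (h0 : ∀ x, |g 0 x| ≤ K) {ν : ℝ} (hν : 0 ≤ ν)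
    (hcrit : ∀ t > 0, ∀ x, deriv (g t) x = 0 →
      deriv (fun s => g s x) t = ν * deriv (deriv (g t)) x)
    (ht : 0 ≤ t) (x : ℝ) : |g t x| ≤ K := by
  have hspace : ∀ s > 0, Continuous (g s) := fun s hs =>
    hg.comp_continuous (.prodMk_right s) fun y => ⟨hs.le, mem_univ y⟩
  refine abs_le'.2 ⟨?_, ?_⟩
  · refine le_of_deriv_nonpos_of_isLocalMax hL hg hdiff hper (fun y => (abs_le'.1 (h0 y)).1)
      (fun s hs y _ hy => ?_) ht x
    rw [hcrit s hs y hy.deriv_eq_zero]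
    exact mul_nonpos_of_nonneg_of_nonpos hν
      (deriv_deriv_nonpos_of_isLocalMax (hspace s hs).continuousAt hy)
  · refine le_of_deriv_nonpos_of_isLocalMax (g := fun s y => -g s y) hL hg.neg
      (fun s hs y => (hdiff s hs y).neg) (fun s hs y => congrArg Neg.neg (hper s hs y))
      (fun y => (abs_le'.1 (h0 y)).2) (fun s hs y _ hy => ?_) ht x
    have hmin : IsLocalMin (g s) y := by simpa only [neg_neg] using hy.neg
    have hddy : deriv (deriv fun z => -g s z) y ≤ 0 :=
      deriv_deriv_nonpos_of_isLocalMax (hspace s hs).neg.continuousAt hy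
    rw [deriv.fun_neg', deriv.fun_neg] at hddy
    rw [deriv.fun_neg, hcrit s hs y hmin.deriv_eq_zero]
    exact neg_nonpos.2 (mul_nonneg hν (neg_nonpos.1 hddy))

end MaximumPrinciple

section OneSidedDerivativeBound

variable {v : ℝ → ℝ} {K : ℝ}

theorem abs_le_mul_of_deriv_le_of_integral_eq_zero {L : ℝ} (hL : 0 < L) (hv : Differentiable ℝ v)
    (hper : Function.Periodic v L) (hmean : ∫ x in 0..L, v x = 0) (hK : ∀ x, deriv v x ≤ K)
    (x : ℝ) : |v x| ≤ K * L := by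
  have hmvt : ∀ y z, y ≤ z → v z - v y ≤ K * (z - y) := fun y z hyz =>
    image_sub_le_mul_sub_of_deriv_le hv hK hyz
  have hK_nonneg : 0 ≤ K := by
    have hperiod := hmvt 0 L hL.le
    rw [hper.eq, sub_self, sub_zero] at hperiod
    exact nonneg_of_mul_nonneg_left hperiod hL
  obtain ⟨z, -, hz⟩ := exists_eq_interval_average hL.ne hv.continuous.continuousOn
  rw [interval_average_eq, hmean, smul_zero] at hz
  obtain ⟨y, ⟨hxy, hyx⟩, hvy⟩ := hper.exists_mem_Ico hL z x
  have hprev : v (y - L) = 0 := by rw [hper.sub_eq, ← hvy, hz]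
  have hvy_zero : v y = 0 := hvy ▸ hz
  refine abs_le'.2 ⟨?_, ?_⟩
  · calc v x = v x - v (y - L) := by rw [hprev, sub_zero]
      _ ≤ K * (x - (y - L)) := hmvt _ _ (by linarith)
      _ ≤ K * L := mul_le_mul_of_nonneg_left (by linarith) hK_nonneg
  · calc -v x = v y - v x := by rw [hvy_zero, zero_sub]
      _ ≤ K * (y - x) := hmvt _ _ hxy
      _ ≤ K * L := mul_le_mul_of_nonneg_left (by linarith) hK_nonneg

theorem integral_abs_deriv_le_of_deriv_le {a b : ℝ} (hab : a ≤ b) (hv : Differentiable ℝ v)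
    (hint : IntervalIntegrable (deriv v) volume a b) (hvab : v a = v b) (hK₀ : 0 ≤ K)
    (hK : ∀ x, deriv v x ≤ K) : ∫ x in a..b, |deriv v x| ≤ 2 * K * (b - a) := by
  calc ∫ x in a..b, |deriv v x| ≤ ∫ x in a..b, (2 * K - deriv v x) :=
        intervalIntegral.integral_mono_on hab hint.abs (intervalIntegrable_const.sub hint)
          fun x _ => abs_le'.2 ⟨by linarith [hK x], by linarith⟩
    _ = 2 * K * (b - a) := by
      rw [intervalIntegral.integral_sub intervalIntegrable_const hint,
        intervalIntegral.integral_deriv_eq_sub (fun x _ => hv x) hint, hvab, sub_self, sub_zero,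
        intervalIntegral.integral_const, smul_eq_mul, mul_comm]

end OneSidedDerivativeBound

section EnergyIntegrals

theorem integral_sub_integral_eq_integral_integral {E : Type*} [NormedAddCommGroup E]
    [NormedSpace ℝ E] [CompleteSpace E] {G R : ℝ → ℝ → E} {a b c d : ℝ} (hab : a ≤ b) (hcd : c ≤ d)
    (hG : ContinuousOn (Function.uncurry G) (Icc a b ×ˢ Icc c d))
    (hR : ContinuousOn (Function.uncurry R) (Icc a b ×ˢ Icc c d))
    (hderiv : ∀ t ∈ Ioo a b, ∀ x ∈ Icc c d, HasDerivAt (fun s => G s x) (R t x) t) :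
    (∫ x in c..d, G b x) - ∫ x in c..d, G a x = ∫ t in a..b, ∫ x in c..d, R t x := by
  have hspace : ∀ t ∈ Icc a b, IntervalIntegrable (G t) volume c d := fun t ht =>
    ContinuousOn.intervalIntegrable_of_Icc hcd
      (hG.comp (Continuous.prodMk_right t).continuousOn fun x hx => ⟨ht, hx⟩)
  have htime : ∀ x ∈ uIcc c d, G b x - G a x = ∫ t in a..b, R t x := fun x hx => by
    rw [uIcc_of_le hcd] at hx
    have hline : ContinuousOn (fun t : ℝ => (t, x)) (Icc a b) :=
      (Continuous.prodMk_left x).continuousOn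
    exact (intervalIntegral.integral_eq_sub_of_hasDerivAt_of_le hab
      (hG.comp hline fun t ht => ⟨ht, hx⟩) (fun t ht => hderiv t ht x hx)
      (ContinuousOn.intervalIntegrable_of_Icc hab (hR.comp hline fun t ht => ⟨ht, hx⟩))).symm
  have hint : IntegrableOn (Function.uncurry R) (uIoc a b ×ˢ uIoc c d) := by
    rw [uIoc_of_le hab, uIoc_of_le hcd]
    exact (hR.integrableOn_compact (isCompact_Icc.prod isCompact_Icc)).mono_set
      (prod_mono Ioc_subset_Icc_self Ioc_subset_Icc_self)
  rw [intervalIntegral_intervalIntegral_swap hint, ← intervalIntegral.integral_congr htime,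
    intervalIntegral.integral_sub (hspace b (right_mem_Icc.2 hab)) (hspace a (left_mem_Icc.2 hab))]

variable {v : ℝ → ℝ} {L : ℝ}

lemma integral_mul_deriv_deriv_of_periodic (hv : ContDiff ℝ 2 v) (hper : Function.Periodic v L) :
    ∫ x in 0..L, v x * deriv (deriv v) x = -∫ x in 0..L, deriv v x ^ 2 := by
  have hv' : ContDiff ℝ 1 (deriv v) := hv.deriv'
  have hdv : ∀ x, HasDerivAt v (deriv v x) x := fun x =>
    (hv.differentiable two_ne_zero x).hasDerivAt
  have hddv : ∀ x, HasDerivAt (deriv v) (deriv (deriv v) x) x := fun x =>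
    (hv'.differentiable one_ne_zero x).hasDerivAt
  rw [intervalIntegral.integral_mul_deriv_eq_deriv_mul (fun x _ => hdv x) (fun x _ => hddv x)
    (hv'.continuous.intervalIntegrable _ _)
    ((hv'.continuous_deriv le_rfl).intervalIntegrable _ _), hper.eq, (periodic_deriv hper).eq,
    sub_self, zero_sub]
  simp only [sq]

lemma integral_comp_mul_deriv_of_periodic {g : ℝ → ℝ} (hg : Continuous g) (hv : ContDiff ℝ 1 v)
    (hper : Function.Periodic v L) : ∫ x in 0..L, g (v x) * deriv v x = 0 := by
  have hsubst := intervalIntegral.integral_comp_mul_deriv (a := 0) (b := L)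
    (fun x _ => (hv.differentiable one_ne_zero x).hasDerivAt)
    (hv.continuous_deriv le_rfl).continuousOn hg
  rwa [hper.eq, intervalIntegral.integral_same] at hsubst

end EnergyIntegrals

namespace IsBurgersSolution

variable {f : ℝ → ℝ} {σ ν : ℝ} {u : ℝ → ℝ → ℝ} {t : ℝ}

section InitialCondition

lemma smooth (h : IsBurgersSolution f σ ν u) : SmoothOnHalfSpace u := h.hu

lemma periodic (h : IsBurgersSolution f σ ν u) (t : ℝ) : Function.Periodic (u t) 1 := h.hper t

lemma sobLp_zero (h : IsBurgersSolution f σ ν u) (ht : 0 ≤ t) (p : ℝ≥0∞) :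
    sobLp 0 p (u t) = lpNorm (u t) p periodMeasure := by
  rw [sobLp_eq_lpNorm ((h.smooth.iteratedDeriv_space 0).contDiff ht).continuous,
    iteratedDeriv_zero]

lemma sobLp_one (h : IsBurgersSolution f σ ν u) (ht : 0 ≤ t) (p : ℝ≥0∞) :
    sobLp 1 p (u t) = lpNorm (deriv (u t)) p periodMeasure := by
  rw [sobLp_eq_lpNorm ((h.smooth.iteratedDeriv_space 1).contDiff ht).continuous,
    iteratedDeriv_one]

lemma memLp (h : IsBurgersSolution f σ ν u) (ht : 0 ≤ t) (p : ℝ≥0∞) :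
    MemLp (u t) p periodMeasure :=
  memLp_periodMeasure (h.smooth.contDiff ht).continuous

lemma lpNorm_one_initial_pos (h : IsBurgersSolution f σ ν u) :
    0 < lpNorm (u 0) 1 periodMeasure :=
  lpNorm_periodMeasure_pos one_ne_zero (h.smooth.contDiff le_rfl).continuous (h.periodic 0) h.hinit

lemma inv_lpNorm_one_initial_le (h : IsBurgersSolution f σ ν u) :
    (lpNorm (u 0) 1 periodMeasure)⁻¹ ≤ burgersD u :=
  h.sobLp_zero le_rfl 1 ▸ le_max_left _ _

lemma burgersD_pos (h : IsBurgersSolution f σ ν u) : 0 < burgersD u :=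
  (inv_pos.2 h.lpNorm_one_initial_pos).trans_le h.inv_lpNorm_one_initial_le

lemma abs_deriv_initial_le (h : IsBurgersSolution f σ ν u) (x : ℝ) :
    |deriv (u 0) x| ≤ burgersD u := by
  have hle : lpNorm (deriv (u 0)) ∞ periodMeasure ≤ burgersD u :=
    h.sobLp_one le_rfl ∞ ▸ le_max_right _ _
  exact (norm_le_lpNorm_top_periodMeasure (h.smooth.deriv_space.contDiff le_rfl).continuous
    (periodic_deriv (h.periodic 0)) x).trans hle

end InitialCondition

section MaximumPrinciple

lemma deriv_time (h : IsBurgersSolution f σ ν u) (ht : 0 < t) (x : ℝ) :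
    deriv (fun s => u s x) t = ν * deriv (deriv (u t)) x - deriv f (u t x) * deriv (u t) x := by
  linarith [h.hpde t ht x]

lemma deriv_time_deriv (h : IsBurgersSolution f σ ν u) (ht : 0 < t) (x : ℝ) :
    deriv (fun s => deriv (u s) x) t = ν * deriv (deriv (deriv (u t))) x -
      (iteratedDeriv 2 f (u t x) * deriv (u t) x ^ 2 +
        deriv f (u t x) * deriv (deriv (u t)) x) := by
  have hu := (h.smooth.differentiable ht.le x).hasDerivAt
  have hu' := (h.smooth.deriv_space.differentiable ht.le x).hasDerivAt
  have hu'' := (h.smooth.deriv_space.deriv_space.differentiable ht.le x).hasDerivAt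
  have hf' := (hasDerivAt_deriv_of_contDiff (contDiff_infty.1 h.hf 2) (u t x)).comp x hu
  rw [h.smooth.deriv_time_deriv_space ht x, funext (h.deriv_time ht)]
  refine ((hu''.const_mul ν).sub (hf'.mul hu')).deriv.trans ?_
  rw [Function.comp_apply]
  ring

lemma deriv_time_deriv_le_of_isLocalMax (h : IsBurgersSolution f σ ν u) (ht : 0 < t) {x : ℝ}
    (hmax : IsLocalMax (deriv (u t)) x) :
    deriv (fun s => deriv (u s) x) t ≤ -(σ * deriv (u t) x ^ 2) := by
  have hconcave : ν * deriv (deriv (deriv (u t))) x ≤ 0 :=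
    mul_nonpos_of_nonneg_of_nonpos h.hν.le <| deriv_deriv_nonpos_of_isLocalMax
      (h.smooth.deriv_space.contDiff ht.le).continuous.continuousAt hmax
  have hconvex : σ * deriv (u t) x ^ 2 ≤ iteratedDeriv 2 f (u t x) * deriv (u t) x ^ 2 :=
    mul_le_mul_of_nonneg_right (h.hconv _) (sq_nonneg _)
  rw [h.deriv_time_deriv ht x, hmax.deriv_eq_zero]
  linarith

theorem deriv_le_burgersD (h : IsBurgersSolution f σ ν u) (ht : 0 ≤ t) (x : ℝ) :
    deriv (u t) x ≤ burgersD u := by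
  refine le_of_deriv_nonpos_of_isLocalMax (g := fun s => deriv (u s)) one_pos
    h.smooth.deriv_space.continuousOn
    (fun s hs y => h.smooth.deriv_space.differentiableAt_time hs y)
    (fun s _ => periodic_deriv (h.periodic s))
    (fun y => (le_abs_self _).trans (h.abs_deriv_initial_le y)) (fun s hs y _ hy => ?_) ht x
  exact (h.deriv_time_deriv_le_of_isLocalMax hs hy).trans
    (neg_nonpos.2 (mul_nonneg h.hσ.le (sq_nonneg _)))

theorem oleinik_mul_deriv_le_inv (h : IsBurgersSolution f σ ν u) (ht : 0 ≤ t) (x : ℝ) :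
    t * deriv (u t) x ≤ σ⁻¹ := by
  refine le_of_deriv_nonpos_of_isLocalMax (g := fun s y => s * deriv (u s) y) one_pos
    (continuous_fst.continuousOn.mul h.smooth.deriv_space.continuousOn)
    (fun s hs y => differentiableAt_id.mul (h.smooth.deriv_space.differentiableAt_time hs y))
    (fun s _ y => congrArg (s * ·) (periodic_deriv (h.periodic s) y))
    (fun y => by simpa only [zero_mul] using (inv_pos.2 h.hσ).le) (fun s hs y hlt hy => ?_) ht x
  have hmax : IsLocalMax (deriv (u s)) y := hy.mono fun z hz => le_of_mul_le_mul_left hz hs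
  have hprod : deriv (fun r => r * deriv (u r) y) s =
      1 * deriv (u s) y + s * deriv (fun r => deriv (u r) y) s :=
    ((hasDerivAt_id s).mul (h.smooth.deriv_space.differentiableAt_time hs y).hasDerivAt).deriv
  have hpos : 0 < deriv (u s) y :=
    pos_of_mul_pos_right ((inv_pos.2 h.hσ).trans hlt) hs.le
  have hone : 1 ≤ σ * (s * deriv (u s) y) := (inv_le_iff_one_le_mul₀' h.hσ).1 hlt.le
  calc deriv (fun r => r * deriv (u r) y) s
      ≤ 1 * deriv (u s) y + s * -(σ * deriv (u s) y ^ 2) :=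
        hprod.trans_le (add_le_add_right (mul_le_mul_of_nonneg_left
          (h.deriv_time_deriv_le_of_isLocalMax hs hmax) hs.le) _)
    _ = deriv (u s) y * (1 - σ * (s * deriv (u s) y)) := by ring
    _ ≤ 0 := mul_nonpos_of_nonneg_of_nonpos hpos.le (sub_nonpos.2 hone)

lemma abs_le_of_deriv_le (h : IsBurgersSolution f σ ν u) (ht : 0 ≤ t) {K : ℝ}
    (hK : ∀ x, deriv (u t) x ≤ K) (x : ℝ) : |u t x| ≤ K := by
  have hmean : ∫ y in (0 : ℝ)..1, u t y = 0 := by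
    rw [intervalIntegral.integral_of_le zero_le_one, h.hmean t ht]
  simpa only [mul_one] using abs_le_mul_of_deriv_le_of_integral_eq_zero one_pos
    (h.smooth.differentiable ht) (h.periodic t) hmean hK x

lemma abs_le_burgersD (h : IsBurgersSolution f σ ν u) (ht : 0 ≤ t) (x : ℝ) :
    |u t x| ≤ burgersD u :=
  h.abs_le_of_deriv_le ht (h.deriv_le_burgersD ht) x

lemma lpNorm_top_le (h : IsBurgersSolution f σ ν u) (ht : 0 ≤ t) :
    lpNorm (u t) ∞ periodMeasure ≤ burgersD u :=
  lpNorm_periodMeasure_le h.burgersD_pos.le fun x _ => h.abs_le_burgersD ht x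

lemma lpNorm_one_deriv_le (h : IsBurgersSolution f σ ν u) (ht : 0 ≤ t) :
    lpNorm (deriv (u t)) 1 periodMeasure ≤ 2 * burgersD u := by
  have hcont : Continuous (deriv (u t)) := (h.smooth.deriv_space.contDiff ht).continuous
  rw [lpNorm_one_eq_integral_norm hcont.aestronglyMeasurable,
    ← intervalIntegral.integral_of_le zero_le_one]
  simpa only [sub_zero, mul_one, Real.norm_eq_abs] using
    integral_abs_deriv_le_of_deriv_le zero_le_one (h.smooth.differentiable ht)
      (hcont.intervalIntegrable 0 1) (h.periodic t).eq.symm h.burgersD_pos.le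
      (h.deriv_le_burgersD ht)

section Flux

variable {F : ℝ}

/-- The viscous flux `G = ν u_x - f(u)` satisfies `G_x = u_t`, hence `G_t = ν G_xx` wherever
`G_x = 0`, and the maximum principle applies to it. -/
theorem abs_mul_deriv_sub_le (h : IsBurgersSolution f σ ν u) (hν : ν ≤ 1)
    (hF : ∀ y, |y| ≤ burgersD u → |f y| ≤ F) (ht : 0 ≤ t) (x : ℝ) :
    |ν * deriv (u t) x - f (u t x)| ≤ burgersD u + F := by
  have hf : Differentiable ℝ f := h.hf.differentiable (by simp)
  have hspace : ∀ s > 0, deriv (fun y => ν * deriv (u s) y - f (u s y)) =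
      fun y => deriv (fun r => u r y) s := fun s hs => funext fun y => by
    rw [h.deriv_time hs y]
    exact (((h.smooth.deriv_space.differentiable hs.le y).hasDerivAt.const_mul ν).sub
      ((hf _).hasDerivAt.comp y (h.smooth.differentiable hs.le y).hasDerivAt)).deriv
  have htime : ∀ s > 0, ∀ y, HasDerivAt (fun r => ν * deriv (u r) y - f (u r y))
      (ν * deriv (fun r => deriv (u r) y) s - deriv f (u s y) * deriv (fun r => u r y) s) s :=
    fun s hs y => ((h.smooth.deriv_space.differentiableAt_time hs y).hasDerivAt.const_mul ν).sub
      ((hf _).hasDerivAt.comp s (h.smooth.differentiableAt_time hs y).hasDerivAt)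
  refine abs_le_of_deriv_eq_mul_deriv_deriv (g := fun s y => ν * deriv (u s) y - f (u s y)) one_pos
    ((continuousOn_const.mul h.smooth.deriv_space.continuousOn).sub
      (hf.continuous.comp_continuousOn h.smooth.continuousOn))
    (fun s hs y => (htime s hs y).differentiableAt)
    (fun s _ y => by simp only [periodic_deriv (h.periodic s) y, h.periodic s y])
    (fun y => ?_) h.hν.le (fun s hs y hy => ?_) ht x
  · have hderiv : |ν * deriv (u 0) y| ≤ burgersD u := by
      rw [abs_mul, abs_of_pos h.hν]
      exact (mul_le_of_le_one_left (abs_nonneg _) hν).trans (h.abs_deriv_initial_le y)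
    exact (abs_sub _ _).trans (add_le_add hderiv (hF _ (h.abs_le_burgersD le_rfl y)))
  · rw [hspace s hs] at hy ⊢
    rw [(htime s hs y).deriv, show deriv (fun r => u r y) s = 0 from hy, mul_zero, sub_zero,
      h.smooth.deriv_time_deriv_space hs y]

theorem abs_deriv_le_div (h : IsBurgersSolution f σ ν u) (hν : ν ≤ 1)
    (hF : ∀ y, |y| ≤ burgersD u → |f y| ≤ F) (ht : 0 ≤ t) (x : ℝ) :
    |deriv (u t) x| ≤ (burgersD u + 2 * F) / ν := by
  have hflux := h.abs_mul_deriv_sub_le hν hF ht x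
  rw [le_div_iff₀' h.hν]
  calc ν * |deriv (u t) x| = |ν * deriv (u t) x - f (u t x) + f (u t x)| := by
        rw [sub_add_cancel, abs_mul, abs_of_pos h.hν]
    _ ≤ |ν * deriv (u t) x - f (u t x)| + |f (u t x)| := abs_add_le _ _
    _ ≤ burgersD u + 2 * F := by linarith [hF _ (h.abs_le_burgersD ht x)]

lemma isDissipativeProfile (h : IsBurgersSolution f σ ν u) (hν : ν ≤ 1)
    (hF : ∀ y, |y| ≤ burgersD u → |f y| ≤ F) (ht : 0 ≤ t) {lam : ℝ}
    (hlam : lam / ν ≤ lpNorm (deriv (u t)) 2 periodMeasure ^ 2) :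
    IsDissipativeProfile (burgersD u) (burgersD u + 2 * F) lam ν (u t) where
  contDiff := h.smooth.contDiff ht
  periodic := h.periodic t
  lpNorm_top_le := h.lpNorm_top_le ht
  lpNorm_one_deriv_le := h.lpNorm_one_deriv_le ht
  lpNorm_top_deriv_le := lpNorm_periodMeasure_le
    ((abs_nonneg _).trans (h.abs_deriv_le_div hν hF ht 0)) fun x _ => h.abs_deriv_le_div hν hF ht x
  le_lpNorm_two_deriv_sq := hlam

end Flux

end MaximumPrinciple

end IsBurgersSolution

namespace IsBurgersSolution

variable {f : ℝ → ℝ} {σ ν Ct : ℝ} {u : ℝ → ℝ → ℝ} {t : ℝ}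

section Energy

lemma continuousOn_lpNorm_deriv_sq (h : IsBurgersSolution f σ ν u) :
    ContinuousOn (fun t => lpNorm (deriv (u t)) 2 periodMeasure ^ 2) (Ici 0) :=
  (continuousOn_lpNorm_periodMeasure h.smooth.deriv_space.continuousOn one_le_two).pow 2

lemma integral_energy_rate (h : IsBurgersSolution f σ ν u) (ht : 0 ≤ t) :
    ∫ x in 0..1, 2 * u t x * (ν * deriv (deriv (u t)) x - deriv f (u t x) * deriv (u t) x) =
      -(2 * ν) * lpNorm (deriv (u t)) 2 periodMeasure ^ 2 := by
  have hv : ContDiff ℝ (⊤ : ℕ∞) (u t) := h.smooth.contDiff ht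
  have hv' : ContDiff ℝ (⊤ : ℕ∞) (deriv (u t)) := h.smooth.deriv_space.contDiff ht
  have hv'' : Continuous (deriv (deriv (u t))) :=
    (h.smooth.deriv_space.deriv_space.contDiff ht).continuous
  have hflux : Continuous fun y => y * deriv f y :=
    continuous_id.mul (h.hf.continuous_deriv (by simp))
  have hdiff : Continuous fun x => 2 * ν * (u t x * deriv (deriv (u t)) x) :=
    continuous_const.mul (hv.continuous.mul hv'')
  have hconv : Continuous fun x => 2 * (u t x * deriv f (u t x) * deriv (u t) x) :=
    continuous_const.mul ((hflux.comp hv.continuous).mul hv'.continuous)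
  calc ∫ x in 0..1, 2 * u t x * (ν * deriv (deriv (u t)) x - deriv f (u t x) * deriv (u t) x)
      = ∫ x in 0..1, (2 * ν * (u t x * deriv (deriv (u t)) x) -
          2 * (u t x * deriv f (u t x) * deriv (u t) x)) := by
        congr 1 with x
        ring
    _ = 2 * ν * (∫ x in 0..1, u t x * deriv (deriv (u t)) x) -
          2 * ∫ x in 0..1, u t x * deriv f (u t x) * deriv (u t) x := by
        rw [intervalIntegral.integral_sub (hdiff.intervalIntegrable _ _)
          (hconv.intervalIntegrable _ _),
          intervalIntegral.integral_const_mul, intervalIntegral.integral_const_mul]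
    _ = -(2 * ν) * lpNorm (deriv (u t)) 2 periodMeasure ^ 2 := by
        rw [integral_mul_deriv_deriv_of_periodic (contDiff_infty.1 hv 2) (h.periodic t),
          integral_comp_mul_deriv_of_periodic hflux (contDiff_infty.1 hv 1) (h.periodic t),
          lpNorm_two_sq_periodMeasure hv'.continuous]
        ring

theorem energy_identity (h : IsBurgersSolution f σ ν u) {a b : ℝ} (ha : 0 ≤ a) (hab : a ≤ b) :
    lpNorm (u b) 2 periodMeasure ^ 2 - lpNorm (u a) 2 periodMeasure ^ 2 =
      -(2 * ν) * ∫ t in a..b, lpNorm (deriv (u t)) 2 periodMeasure ^ 2 := by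
  have hslab : Icc a b ×ˢ Icc (0 : ℝ) 1 ⊆ Ici 0 ×ˢ univ := prod_mono
    (fun t ht => ha.trans ht.1) (subset_univ _)
  have hu : ContinuousOn (Function.uncurry u) (Icc a b ×ˢ Icc 0 1) :=
    h.smooth.continuousOn.mono hslab
  have hux := h.smooth.deriv_space.continuousOn.mono hslab
  have huxx := h.smooth.deriv_space.deriv_space.continuousOn.mono hslab
  have hf' : Continuous (deriv f) := h.hf.continuous_deriv (by simp)
  have hrate : ContinuousOn (Function.uncurry fun t x => 2 * u t x *
      (ν * deriv (deriv (u t)) x - deriv f (u t x) * deriv (u t) x)) (Icc a b ×ˢ Icc 0 1) :=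
    (continuousOn_const.mul hu).mul
      ((continuousOn_const.mul huxx).sub ((hf'.comp_continuousOn hu).mul hux))
  have hderiv : ∀ t ∈ Ioo a b, ∀ x ∈ Icc (0 : ℝ) 1, HasDerivAt (fun s => u s x ^ 2)
      (2 * u t x * (ν * deriv (deriv (u t)) x - deriv f (u t x) * deriv (u t) x)) t :=
    fun t ht x _ => by
      rw [← h.deriv_time (ha.trans_lt ht.1) x]
      simpa using (h.smooth.differentiableAt_time (ha.trans_lt ht.1) x).hasDerivAt.fun_pow 2
  rw [lpNorm_two_sq_periodMeasure (h.smooth.contDiff (ha.trans hab)).continuous,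
    lpNorm_two_sq_periodMeasure (h.smooth.contDiff ha).continuous,
    integral_sub_integral_eq_integral_integral (G := fun t x => u t x ^ 2) hab zero_le_one
      ((continuous_pow 2).comp_continuousOn hu) hrate hderiv, ← intervalIntegral.integral_const_mul]
  refine intervalIntegral.integral_congr fun t ht => h.integral_energy_rate ?_
  exact ha.trans (uIcc_of_le hab ▸ ht).1

lemma inv_burgersD_sq_sub_le_lpNorm_two_sq (h : IsBurgersSolution f σ ν u)
    (hb : ∀ s, 0 ≤ s → sobLp 1 2 (u s) ^ 2 ≤ Ct * ν⁻¹) (ht : 0 ≤ t) :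
    (burgersD u ^ 2)⁻¹ - 2 * t * Ct ≤ lpNorm (u t) 2 periodMeasure ^ 2 := by
  have hinit : (burgersD u ^ 2)⁻¹ ≤ lpNorm (u 0) 2 periodMeasure ^ 2 := by
    rw [← inv_pow]
    exact pow_le_pow_left₀ (inv_nonneg.2 h.burgersD_pos.le)
      ((inv_le_of_inv_le₀ h.lpNorm_one_initial_pos h.inv_lpNorm_one_initial_le).trans
        (lpNorm_mono_exponent one_le_two (h.memLp le_rfl 2))) 2
  have hdissipation : ∫ s in 0..t, lpNorm (deriv (u s)) 2 periodMeasure ^ 2 ≤ t * (Ct * ν⁻¹) := by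
    calc _ ≤ ∫ _ in 0..t, Ct * ν⁻¹ := intervalIntegral.integral_mono_on ht
          ((h.continuousOn_lpNorm_deriv_sq.mono Icc_subset_Ici_self).intervalIntegrable_of_Icc ht)
          intervalIntegrable_const fun s hs => h.sobLp_one hs.1 2 ▸ hb s hs.1
      _ = t * (Ct * ν⁻¹) := by rw [intervalIntegral.integral_const, sub_zero, smul_eq_mul]
  calc (burgersD u ^ 2)⁻¹ - 2 * t * Ct
      = (burgersD u ^ 2)⁻¹ - 2 * ν * (t * (Ct * ν⁻¹)) := by field_simp [h.hν.ne']
    _ ≤ lpNorm (u 0) 2 periodMeasure ^ 2 -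
          2 * ν * ∫ s in 0..t, lpNorm (deriv (u s)) 2 periodMeasure ^ 2 :=
        sub_le_sub hinit (mul_le_mul_of_nonneg_left hdissipation (by linarith [h.hν]))
    _ = lpNorm (u t) 2 periodMeasure ^ 2 := by linarith [h.energy_identity le_rfl ht]

lemma lpNorm_two_sq_le_of_le_time (h : IsBurgersSolution f σ ν u)
    (ht : 2 * burgersD u * σ⁻¹ ≤ t) :
    lpNorm (u t) 2 periodMeasure ^ 2 ≤ (burgersD u ^ 2)⁻¹ / 4 := by
  have hD := h.burgersD_pos
  have hσ := h.hσ
  have ht₀ : 0 < t := lt_of_lt_of_le (by positivity) ht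
  have hslope : ∀ x, deriv (u t) x ≤ (2 * burgersD u)⁻¹ := fun x => by
    refine le_of_mul_le_mul_left ?_ ht₀
    calc t * deriv (u t) x ≤ 2 * burgersD u * σ⁻¹ * (2 * burgersD u)⁻¹ :=
          (h.oleinik_mul_deriv_le_inv ht₀.le x).trans_eq (by field_simp)
      _ ≤ t * (2 * burgersD u)⁻¹ := by gcongr
  have hle : lpNorm (u t) 2 periodMeasure ≤ (2 * burgersD u)⁻¹ :=
    lpNorm_periodMeasure_le (by positivity) fun x _ => h.abs_le_of_deriv_le ht₀.le hslope x
  calc lpNorm (u t) 2 periodMeasure ^ 2 ≤ (2 * burgersD u)⁻¹ ^ 2 :=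
        pow_le_pow_left₀ lpNorm_nonneg hle 2
    _ = (burgersD u ^ 2)⁻¹ / 4 := by ring

end Energy

end IsBurgersSolution

section TimeAverages

variable {A B : ℝ → ℝ} {a b K : ℝ}

lemma mul_sub_le_integral_of_le_on_Icc {c : ℝ} (hac : a ≤ c) (hcb : c ≤ b)
    (hB : IntervalIntegrable B volume a b) (hB₀ : ∀ t, 0 ≤ B t) (hK : ∀ t ∈ Icc a c, K ≤ B t) :
    K * (c - a) ≤ ∫ t in a..b, B t := by
  have hBc : IntervalIntegrable B volume a c :=
    hB.mono_set (uIcc_subset_uIcc_left (mem_uIcc_of_le hac hcb))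
  calc K * (c - a) = ∫ _ in a..c, K := by
        rw [intervalIntegral.integral_const, smul_eq_mul, mul_comm]
    _ ≤ ∫ t in a..c, B t := intervalIntegral.integral_mono_on hac intervalIntegrable_const hBc hK
    _ ≤ ∫ t in a..b, B t := intervalIntegral.integral_mono_interval le_rfl hac hcb
        (.of_forall hB₀) hB

lemma div_mul_integral_sub_le_integral {M lam : ℝ} (hab : a ≤ b) (hM : 0 < M) (hlam : 0 ≤ lam)
    (hK₀ : 0 ≤ K) (hA : IntervalIntegrable A volume a b) (hB : IntervalIntegrable B volume a b)
    (hAM : ∀ t ∈ Icc a b, A t ≤ M) (hB₀ : ∀ t, 0 ≤ B t)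
    (hK : ∀ t ∈ Icc a b, lam ≤ A t → K ≤ B t) :
    K / M * ((∫ t in a..b, A t) - lam * (b - a)) ≤ ∫ t in a..b, B t := by
  have hpointwise : ∀ t ∈ Icc a b, K / M * (A t - lam) ≤ B t := fun t ht => by
    rcases le_total lam (A t) with hlarge | hsmall
    · refine le_trans ?_ (hK t ht hlarge)
      rw [div_mul_eq_mul_div, div_le_iff₀ hM]
      exact mul_le_mul_of_nonneg_left (by linarith [hAM t ht]) hK₀
    · exact (mul_nonpos_of_nonneg_of_nonpos (by positivity) (sub_nonpos.2 hsmall)).trans (hB₀ t)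
  calc K / M * ((∫ t in a..b, A t) - lam * (b - a)) = ∫ t in a..b, K / M * (A t - lam) := by
        rw [intervalIntegral.integral_const_mul, intervalIntegral.integral_sub hA
          intervalIntegrable_const, intervalIntegral.integral_const, smul_eq_mul, mul_comm lam]
    _ ≤ ∫ t in a..b, B t := intervalIntegral.integral_mono_on hab
        ((hA.sub intervalIntegrable_const).const_mul _) hB hpointwise

end TimeAverages

section TimeWindow

variable {σ D Ct : ℝ}

lemma burgersT₁_pos (hD : 0 < D) (hCt : 0 < Ct) : 0 < burgersT₁ D Ct := by
  unfold burgersT₁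
  positivity

lemma burgersT₁_mul (hCt : Ct ≠ 0) : burgersT₁ D Ct * Ct = (D ^ 2)⁻¹ / 4 := by
  unfold burgersT₁
  field_simp

lemma burgersT₁_lt_burgersT₂ (hD : 0 < D) (hCt : 0 < Ct) : burgersT₁ D Ct < burgersT₂ σ D Ct :=
  lt_of_lt_of_le (by linarith [burgersT₁_pos hD hCt]) (le_max_left _ _)

end TimeWindow

namespace IsBurgersSolution

variable {f : ℝ → ℝ} {σ ν D Ct F : ℝ} {u : ℝ → ℝ → ℝ} {p : ℝ≥0∞}

lemma intervalIntegrable_sobLp_sq (h : IsBurgersSolution f σ ν u) (m : ℕ) (hp : 1 ≤ p) {a b : ℝ}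
    (ha : 0 ≤ a) (hab : a ≤ b) :
    IntervalIntegrable (fun t => sobLp m p (u t) ^ 2) volume a b :=
  (((h.smooth.continuousOn_sobLp m hp).pow 2).mono fun _ ht =>
    ha.trans ht.1).intervalIntegrable_of_Icc hab

lemma inv_burgersD_cube_div_le_sobLp_zero (h : IsBurgersSolution f σ ν u) (hCt : 0 < Ct)
    (hb : ∀ s, 0 ≤ s → sobLp 1 2 (u s) ^ 2 ≤ Ct * ν⁻¹) (hp : 1 ≤ p) {t : ℝ} (ht₀ : 0 ≤ t)
    (ht : t ≤ 3 / 2 * burgersT₁ (burgersD u) Ct) :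
    (burgersD u ^ 3)⁻¹ / 4 ≤ sobLp 0 p (u t) := by
  have hD := h.burgersD_pos
  have htime : t * Ct ≤ 3 / 2 * ((burgersD u ^ 2)⁻¹ / 4) := by
    rw [← burgersT₁_mul hCt.ne', ← mul_assoc]
    exact mul_le_mul_of_nonneg_right ht hCt.le
  refine le_of_mul_le_mul_left ?_ hD
  calc burgersD u * ((burgersD u ^ 3)⁻¹ / 4) = (burgersD u ^ 2)⁻¹ / 4 := by field_simp
    _ ≤ lpNorm (u t) 2 periodMeasure ^ 2 := by
      linarith [h.inv_burgersD_sq_sub_le_lpNorm_two_sq hb ht₀]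
    _ ≤ lpNorm (u t) ∞ periodMeasure * lpNorm (u t) 1 periodMeasure :=
      lpNorm_two_sq_le_lpNorm_top_mul_lpNorm_one (h.memLp ht₀ ∞)
    _ ≤ burgersD u * lpNorm (u t) p periodMeasure :=
      mul_le_mul (h.lpNorm_top_le ht₀) (lpNorm_mono_exponent hp (h.memLp ht₀ p)) lpNorm_nonneg hD.le
    _ = burgersD u * sobLp 0 p (u t) := by rw [h.sobLp_zero ht₀]

lemma inv_burgersD_sq_div_le_mul_integral (h : IsBurgersSolution f σ ν u) (hCt : 0 < Ct)
    (hb : ∀ s, 0 ≤ s → sobLp 1 2 (u s) ^ 2 ≤ Ct * ν⁻¹) :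
    (burgersD u ^ 2)⁻¹ / 8 ≤ ν * ∫ t in burgersT₁ (burgersD u) Ct..burgersT₂ σ (burgersD u) Ct,
      lpNorm (deriv (u t)) 2 periodMeasure ^ 2 := by
  have hT₁ := (burgersT₁_pos h.burgersD_pos hCt).le
  have hstart := h.inv_burgersD_sq_sub_le_lpNorm_two_sq hb hT₁
  have hend := h.lpNorm_two_sq_le_of_le_time
    (le_max_right (3 / 2 * burgersT₁ (burgersD u) Ct) (2 * burgersD u * σ⁻¹))
  have hbalance := h.energy_identity hT₁
    (burgersT₁_lt_burgersT₂ (σ := σ) h.burgersD_pos hCt).le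
  rw [mul_assoc, burgersT₁_mul hCt.ne'] at hstart
  rw [← burgersT₂] at hend
  linarith

theorem le_timeAvg_sobLp_zero_sq (h : IsBurgersSolution f σ ν u) (hCt : 0 < Ct)
    (hb : ∀ s, 0 ≤ s → sobLp 1 2 (u s) ^ 2 ≤ Ct * ν⁻¹) (hp : 1 ≤ p) :
    (burgersT₂ σ (burgersD u) Ct - burgersT₁ (burgersD u) Ct)⁻¹ *
        (((burgersD u ^ 3)⁻¹ / 4) ^ 2 * (burgersT₁ (burgersD u) Ct / 2)) ≤
      timeAvg (burgersT₁ (burgersD u) Ct) (burgersT₂ σ (burgersD u) Ct)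
        fun t => sobLp 0 p (u t) ^ 2 := by
  have hD := h.burgersD_pos
  have hT₁ := burgersT₁_pos hD hCt
  have hT₁₂ := burgersT₁_lt_burgersT₂ (σ := σ) hD hCt
  refine mul_le_mul_of_nonneg_left ?_ (inv_nonneg.2 (sub_nonneg.2 hT₁₂.le))
  have hintegral := mul_sub_le_integral_of_le_on_Icc (by linarith)
    (le_max_left (3 / 2 * burgersT₁ (burgersD u) Ct) (2 * burgersD u * σ⁻¹))
    (h.intervalIntegrable_sobLp_sq 0 hp hT₁.le hT₁₂.le) (fun t => sq_nonneg _) fun t ht =>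
      pow_le_pow_left₀ (by positivity)
        (h.inv_burgersD_cube_div_le_sobLp_zero hCt hb hp (hT₁.le.trans ht.1) ht.2) 2
  refine le_of_eq_of_le ?_ hintegral
  ring

theorem mul_le_timeAvg_sobLp_sq (h : IsBurgersSolution f σ ν u) (hCt : 0 < Ct)
    (hb : ∀ s, 0 ≤ s → sobLp 1 2 (u s) ^ 2 ≤ Ct * ν⁻¹) (hp : 1 ≤ p) {m : ℕ} {K : ℝ} (hK₀ : 0 ≤ K)
    (hK : ∀ t, 0 ≤ t → (burgersD u ^ 2)⁻¹ /
        (16 * (burgersT₂ σ (burgersD u) Ct - burgersT₁ (burgersD u) Ct)) / ν ≤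
          lpNorm (deriv (u t)) 2 periodMeasure ^ 2 → K ≤ sobLp m p (u t) ^ 2) :
    (burgersT₂ σ (burgersD u) Ct - burgersT₁ (burgersD u) Ct)⁻¹ *
        ((burgersD u ^ 2)⁻¹ / (16 * Ct)) * K ≤
      timeAvg (burgersT₁ (burgersD u) Ct) (burgersT₂ σ (burgersD u) Ct)
        fun t => sobLp m p (u t) ^ 2 := by
  have hν := h.hν
  have hD := h.burgersD_pos
  have hT₁ := (burgersT₁_pos hD hCt).le
  have hT₁₂ := burgersT₁_lt_burgersT₂ (σ := σ) hD hCt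
  have hdissipation := h.inv_burgersD_sq_div_le_mul_integral hCt hb
  set T₁ := burgersT₁ (burgersD u) Ct
  set T₂ := burgersT₂ σ (burgersD u) Ct
  have hlength : 0 < T₂ - T₁ := sub_pos.2 hT₁₂
  unfold timeAvg
  rw [mul_assoc]
  refine mul_le_mul_of_nonneg_left ?_ (inv_nonneg.2 hlength.le)
  refine le_trans ?_ (div_mul_integral_sub_le_integral (M := Ct * ν⁻¹) hT₁₂.le (by positivity)
    (by positivity) hK₀ ((h.continuousOn_lpNorm_deriv_sq.mono
      fun t ht => hT₁.trans ht.1).intervalIntegrable_of_Icc hT₁₂.le)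
    (h.intervalIntegrable_sobLp_sq m hp hT₁ hT₁₂.le)
    (fun t ht => h.sobLp_one (hT₁.trans ht.1) 2 ▸ hb t (hT₁.trans ht.1)) (fun t => sq_nonneg _)
    fun t ht => hK t (hT₁.trans ht.1))
  set I := ∫ t in T₁..T₂, lpNorm (deriv (u t)) 2 periodMeasure ^ 2
  calc (burgersD u ^ 2)⁻¹ / (16 * Ct) * K
      = K / Ct * ((burgersD u ^ 2)⁻¹ / 8 - (burgersD u ^ 2)⁻¹ / 16) := by ring
    _ ≤ K / Ct * (ν * I - (burgersD u ^ 2)⁻¹ / 16) := by gcongr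
    _ = K / (Ct * ν⁻¹) * (I - (burgersD u ^ 2)⁻¹ / (16 * (T₂ - T₁)) / ν * (T₂ - T₁)) := by
      field_simp

theorem exists_mul_rpow_le_sqrt_timeAvg (hD : 0 < D) (hCt : 0 < Ct)
    (hF : ∀ y, |y| ≤ D → |f y| ≤ F) (hp : 1 ≤ p) {m : ℕ} (hm : m ≠ 0) :
    ∃ c > 0, ∀ ν ≤ 1, ∀ u, IsBurgersSolution f σ ν u → burgersD u = D →
      (∀ t, 0 ≤ t → sobLp 1 2 (u t) ^ 2 ≤ Ct * ν⁻¹) →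
        c * ν ^ (-(m - (1 / p).toReal)) ≤
          √(timeAvg (burgersT₁ D Ct) (burgersT₂ σ D Ct) fun t => sobLp m p (u t) ^ 2) := by
  have hlength := sub_pos.2 (burgersT₁_lt_burgersT₂ (σ := σ) hD hCt)
  have hF₀ : 0 ≤ F := (abs_nonneg _).trans (hF 0 (by simpa only [abs_zero] using hD.le))
  obtain ⟨c, hc, hprofile⟩ := IsDissipativeProfile.exists_mul_rpow_le_sobLp hp hD
    (by positivity : 0 < D + 2 * F)
    (by positivity : 0 < (D ^ 2)⁻¹ / (16 * (burgersT₂ σ D Ct - burgersT₁ D Ct))) hm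
  refine ⟨√((burgersT₂ σ D Ct - burgersT₁ D Ct)⁻¹ * ((D ^ 2)⁻¹ / (16 * Ct))) * c, by positivity, ?_⟩
  rintro ν hν₁ u h rfl hb
  have hν := h.hν
  rw [mul_assoc]
  refine Real.le_sqrt_of_sq_le ?_
  rw [mul_pow, Real.sq_sqrt (by positivity)]
  exact h.mul_le_timeAvg_sobLp_sq hCt hb hp (sq_nonneg _) fun t ht hlarge =>
    pow_le_pow_left₀ (by positivity)
      (hprofile ν hν (u t) (h.isDissipativeProfile hν₁ hF ht hlarge)) 2

theorem exists_le_sqrt_timeAvg_sobLp_zero (hD : 0 < D) (hCt : 0 < Ct) (hp : 1 ≤ p) :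
    ∃ c > 0, ∀ ν u, IsBurgersSolution f σ ν u → burgersD u = D →
      (∀ t, 0 ≤ t → sobLp 1 2 (u t) ^ 2 ≤ Ct * ν⁻¹) →
        c ≤ √(timeAvg (burgersT₁ D Ct) (burgersT₂ σ D Ct) fun t => sobLp 0 p (u t) ^ 2) := by
  have hT₁ := burgersT₁_pos hD hCt
  have hlength := sub_pos.2 (burgersT₁_lt_burgersT₂ (σ := σ) hD hCt)
  refine ⟨_, Real.sqrt_pos.2 ?_, fun ν u h hDu hb =>
    Real.sqrt_le_sqrt (hDu ▸ h.le_timeAvg_sobLp_zero_sq hCt hb hp)⟩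
  positivity

end IsBurgersSolution

/-- For every integer `m ≥ 0` and `p ∈ [1,∞]`, with
`γ = max(0, m - 1/p)`, there is `c > 0` depending only on `f`, `D`, `m`, `p`
such that for every `ν ∈ (0,1]`, `{|u(t)|_{m,p}²}^{1/2} ≥ c ν^{-γ}`. -/
theorem statement10 (f : ℝ → ℝ) (σ D Ct : ℝ) (hCt : 0 < Ct)
    (hCtb : ∀ ν, 0 < ν → ν ≤ 1 →
      ∀ u : ℝ → ℝ → ℝ, IsBurgersSolution f σ ν u → burgersD u = D →
        ∀ t, 0 ≤ t → sobLp 1 2 (u t) ^ 2 ≤ Ct * ν⁻¹)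
    (m : ℕ) (p : ℝ≥0∞) (hp : 1 ≤ p) :
    ∃ c > 0, ∀ ν, 0 < ν → ν ≤ 1 →
      ∀ u : ℝ → ℝ → ℝ, IsBurgersSolution f σ ν u → burgersD u = D →
        c * ν ^ (-(max 0 ((m : ℝ) - (1 / p).toReal)))
          ≤ Real.sqrt (timeAvg (burgersT₁ D Ct) (burgersT₂ σ D Ct)
              (fun t => sobLp m p (u t) ^ 2)) := by
  by_cases hex : ∃ ν u, IsBurgersSolution f σ ν u ∧ burgersD u = D
  swap
  · exact ⟨1, one_pos, fun ν _ _ u h hD => (hex ⟨ν, u, h, hD⟩).elim⟩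
  obtain ⟨ν₀, u₀, h₀, hD₀⟩ := hex
  have hD : 0 < D := hD₀ ▸ h₀.burgersD_pos
  have hpinv := toReal_one_div_le_one hp
  rcases eq_or_ne m 0 with rfl | hm
  · obtain ⟨c, hc, hle⟩ := IsBurgersSolution.exists_le_sqrt_timeAvg_sobLp_zero hD hCt hp
    refine ⟨c, hc, fun ν hν hν₁ u h hDu => ?_⟩
    rw [max_eq_left (by simp), neg_zero, Real.rpow_zero, mul_one]
    exact hle ν u h hDu (hCtb ν hν hν₁ u h hDu)
  · obtain ⟨F, hF⟩ := isCompact_Icc.exists_bound_of_continuousOn (s := Icc (-D) D)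
      h₀.hf.continuous.continuousOn
    obtain ⟨c, hc, hle⟩ := IsBurgersSolution.exists_mul_rpow_le_sqrt_timeAvg hD hCt
      (fun y hy => hF y (abs_le.1 hy)) hp hm
    refine ⟨c, hc, fun ν hν hν₁ u h hDu => ?_⟩
    have hm₁ : (1 : ℝ) ≤ m := Nat.one_le_cast.2 (Nat.one_le_iff_ne_zero.2 hm)
    rw [max_eq_right (by linarith)]
    exact hle ν hν₁ u h hDu (hCtb ν hν hν₁ u h hDu)
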